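/- arXiv:2206.13063 — 9 statements merged into one kernel-verified Lean document; each statement's English description precedes it below -/
import Mathlib

section
/- Let P and Q be probability measures on a measurable space (X, 𝓕). Then (1/2)·H²(P,Q) ≤ sup over measurable functions g : X → ℝ of (1 − E_P[e^{g}] · E_Q[e^{−g}]) ≤ H²(P,Q), where the expectations E_P[e^{g}], E_Q[e^{−g}] take values in (0, ∞] and a term in which either expectation is infinite is interpreted as −∞ inside the supremum. -/
/-!
With `r = √(dP/dν)`, `s = √(dQ/dν)`, `ν = P + Q`, let `b = ∫ r s dν` be the Hellinger affinity, so
that `H² = 2 - 2 b` and `0 ≤ b ≤ 1`. The supremum equals `1 - b²`. Cauchy–Schwarz applied to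
`r s = (r e^{g/2}) (s e^{-g/2})` gives `b² ≤ E_P[e^g] E_Q[e^{-g}]` (`sq_affinity_le`), and
`e^g = (s + δ) / (r + δ)` comes within `O(δ)` of equality (`exists_expTest_le`); the shift by `δ`
keeps `g` real-valued where a density vanishes. Finally `1 - b² = (H² / 2) (1 + b)` lies between
`H² / 2` and `H²`.
-/


open MeasureTheory
open scoped ENNReal

/-- Squared Hellinger distance between two measures, computed with respect to the
dominating measure `P + Q`. -/
noncomputable def hellingerSq {X : Type*} [MeasurableSpace X] (P Q : Measure X) : ℝ :=
  ∫ x, (Real.sqrt ((P.rnDeriv (P + Q) x).toReal)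
      - Real.sqrt ((Q.rnDeriv (P + Q) x).toReal)) ^ 2 ∂(P + Q)

/-- The value `1 - E_P[e^g] ⬝ E_Q[e^{-g}]` as an extended real: if either expectation is
infinite, the product is `∞` and the value is `⊥ = -∞`. -/
noncomputable def expTestValue {X : Type*} [MeasurableSpace X] (P Q : Measure X)
    (g : X → ℝ) : EReal :=
  (1 : EReal) - (((∫⁻ x, ENNReal.ofReal (Real.exp (g x)) ∂P) *
      (∫⁻ x, ENNReal.ofReal (Real.exp (-(g x))) ∂Q) : ℝ≥0∞) : EReal)


/-- The square root of the density of `P` with respect to `ν`. -/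
noncomputable def sqrtDensity {X : Type*} [MeasurableSpace X] (P ν : Measure X) (x : X) : ℝ :=
  Real.sqrt ((P.rnDeriv ν x).toReal)

/-- The Hellinger affinity (Bhattacharyya coefficient) `∫ √(dP/dν) √(dQ/dν) dν` with `ν = P + Q`. -/
noncomputable def affinity {X : Type*} [MeasurableSpace X] (P Q : Measure X) : ℝ :=
  ∫ x, sqrtDensity P (P + Q) x * sqrtDensity Q (P + Q) x ∂(P + Q)

section

variable {X : Type*} [MeasurableSpace X]

lemma sqrtDensity_nonneg (P ν : Measure X) (x : X) : 0 ≤ sqrtDensity P ν x := Real.sqrt_nonneg _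

lemma measurable_sqrtDensity (P ν : Measure X) : Measurable (sqrtDensity P ν) :=
  (Measure.measurable_rnDeriv P ν).ennreal_toReal.sqrt

lemma sqrtDensity_sq (P ν : Measure X) (x : X) :
    sqrtDensity P ν x ^ 2 = (P.rnDeriv ν x).toReal :=
  Real.sq_sqrt ENNReal.toReal_nonneg

lemma lintegral_eq_sqrtDensity (P ν : Measure X) [IsFiniteMeasure P] [IsFiniteMeasure ν]
    (h : P ≪ ν) {f : X → ℝ} (hf : Measurable f) :
    ∫⁻ x, ENNReal.ofReal (f x) ∂P = ∫⁻ x, ENNReal.ofReal (sqrtDensity P ν x ^ 2 * f x) ∂ν := by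
  rw [← lintegral_rnDeriv_mul h hf.ennreal_ofReal.aemeasurable]
  refine lintegral_congr_ae ?_
  filter_upwards [P.rnDeriv_lt_top ν] with x hx
  rw [sqrtDensity_sq, ENNReal.ofReal_mul ENNReal.toReal_nonneg, ENNReal.ofReal_toReal hx.ne]

lemma integrable_sqrtDensity_sq (P ν : Measure X) [IsFiniteMeasure P] :
    Integrable (fun x => sqrtDensity P ν x ^ 2) ν := by
  simp only [sqrtDensity_sq]
  exact Measure.integrable_toReal_rnDeriv

lemma integral_sqrtDensity_sq (P ν : Measure X) [IsProbabilityMeasure P] [IsFiniteMeasure ν]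
    (h : P ≪ ν) : ∫ x, sqrtDensity P ν x ^ 2 ∂ν = 1 := by
  simp only [sqrtDensity_sq]
  rw [Measure.integral_toReal_rnDeriv h]
  simp

lemma memLp_sqrtDensity (P ν : Measure X) [IsFiniteMeasure P] : MemLp (sqrtDensity P ν) 2 ν :=
  (memLp_two_iff_integrable_sq (measurable_sqrtDensity P ν).aestronglyMeasurable).2
    (integrable_sqrtDensity_sq P ν)

lemma integrable_sqrtDensity_mul (P Q ν : Measure X) [IsFiniteMeasure P] [IsFiniteMeasure Q] :
    Integrable (fun x => sqrtDensity P ν x * sqrtDensity Q ν x) ν :=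
  (memLp_sqrtDensity P ν).integrable_mul (memLp_sqrtDensity Q ν)

lemma affinity_nonneg (P Q : Measure X) : 0 ≤ affinity P Q :=
  integral_nonneg fun _ => mul_nonneg (sqrtDensity_nonneg _ _ _) (sqrtDensity_nonneg _ _ _)

lemma affinity_comm (P Q : Measure X) : affinity Q P = affinity P Q := by
  simp only [affinity, add_comm Q P, mul_comm]

lemma absolutelyContinuous_add (P Q : Measure X) : P ≪ P + Q ∧ Q ≪ P + Q :=
  ⟨Measure.AbsolutelyContinuous.rfl.add_right Q, by
    rw [add_comm]; exact Measure.AbsolutelyContinuous.rfl.add_right P⟩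

lemma hellingerSq_eq (P Q : Measure X) [IsProbabilityMeasure P] [IsProbabilityMeasure Q] :
    hellingerSq P Q = 2 - 2 * affinity P Q := by
  have hP := integral_sqrtDensity_sq P (P + Q) (absolutelyContinuous_add P Q).1
  have hQ := integral_sqrtDensity_sq Q (P + Q) (absolutelyContinuous_add P Q).2
  have iP := integrable_sqrtDensity_sq P (P + Q)
  have iQ := integrable_sqrtDensity_sq Q (P + Q)
  have iPQ := integrable_sqrtDensity_mul P Q (P + Q)
  have e : hellingerSq P Q = ∫ x, ((sqrtDensity P (P + Q) x ^ 2 + sqrtDensity Q (P + Q) x ^ 2)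
      - 2 * (sqrtDensity P (P + Q) x * sqrtDensity Q (P + Q) x)) ∂(P + Q) := by
    refine integral_congr_ae (Filter.Eventually.of_forall fun x => ?_)
    simp only [sqrtDensity]
    ring
  have iSum : Integrable (fun x => sqrtDensity P (P + Q) x ^ 2 + sqrtDensity Q (P + Q) x ^ 2)
      (P + Q) := iP.add iQ
  rw [e, integral_sub iSum (iPQ.const_mul 2), integral_add iP iQ, integral_const_mul,
    hP, hQ, affinity]
  norm_num

lemma hellingerSq_nonneg (P Q : Measure X) : 0 ≤ hellingerSq P Q :=
  integral_nonneg fun _ => sq_nonneg _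

/-- Cauchy–Schwarz: `b² ≤ E_P[e^g] E_Q[e^{-g}]` for every measurable `g`. -/
lemma sq_affinity_le (P Q : Measure X) [IsProbabilityMeasure P] [IsProbabilityMeasure Q]
    {g : X → ℝ} (hg : Measurable g) :
    ENNReal.ofReal (affinity P Q ^ 2) ≤ (∫⁻ x, ENNReal.ofReal (Real.exp (g x)) ∂P) *
      (∫⁻ x, ENNReal.ofReal (Real.exp (-(g x))) ∂Q) := by
  set ν := P + Q with hν
  rw [lintegral_eq_sqrtDensity P ν (absolutelyContinuous_add P Q).1 hg.exp,
    lintegral_eq_sqrtDensity Q ν (absolutelyContinuous_add P Q).2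
      (f := fun x => Real.exp (-(g x))) hg.neg.exp]
  set r := sqrtDensity P ν
  set s := sqrtDensity Q ν
  have hr : ∀ x, 0 ≤ r x := sqrtDensity_nonneg P ν
  have hs : ∀ x, 0 ≤ s x := sqrtDensity_nonneg Q ν
  have mr : Measurable r := measurable_sqrtDensity P ν
  have ms : Measurable s := measurable_sqrtDensity Q ν
  have hb : ENNReal.ofReal (affinity P Q) = ∫⁻ x, ENNReal.ofReal (r x * s x) ∂ν :=
    ofReal_integral_eq_lintegral_ofReal (integrable_sqrtDensity_mul P Q ν)
      (Filter.Eventually.of_forall fun x => mul_nonneg (hr x) (hs x))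
  have holder := ENNReal.lintegral_mul_le_Lp_mul_Lq ν Real.HolderConjugate.two_two
    (f := fun x => ENNReal.ofReal (r x * Real.exp (g x / 2)))
    (g := fun x => ENNReal.ofReal (s x * Real.exp (-(g x) / 2)))
    (mr.mul (hg.div_const 2).exp).ennreal_ofReal.aemeasurable
    (ms.mul (hg.neg.div_const 2).exp).ennreal_ofReal.aemeasurable
  have e0 : ∀ x, ENNReal.ofReal (r x * Real.exp (g x / 2)) *
      ENNReal.ofReal (s x * Real.exp (-(g x) / 2)) = ENNReal.ofReal (r x * s x) := fun x => by
    rw [← ENNReal.ofReal_mul (mul_nonneg (hr x) (Real.exp_pos _).le)]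
    congr 1
    rw [mul_mul_mul_comm, ← Real.exp_add, neg_div, add_neg_cancel, Real.exp_zero, mul_one]
  have esq : ∀ a t : ℝ, 0 ≤ a → ENNReal.ofReal (a * Real.exp (t / 2)) ^ (2 : ℝ) =
      ENNReal.ofReal (a ^ 2 * Real.exp t) := fun a t ha => by
    rw [ENNReal.rpow_two, ← ENNReal.ofReal_pow (mul_nonneg ha (Real.exp_pos _).le), mul_pow,
      ← Real.exp_nat_mul]
    congr 3
    push_cast
    ring
  simp only [Pi.mul_apply, e0, esq _ _ (hr _), esq _ _ (hs _)] at holder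
  rw [ENNReal.ofReal_pow (affinity_nonneg P Q), hb]
  refine (pow_le_pow_left' holder 2).trans_eq ?_
  rw [mul_pow, ← ENNReal.rpow_two, ← ENNReal.rpow_two, ← ENNReal.rpow_mul, ← ENNReal.rpow_mul]
  norm_num

/-- The one-sided estimate behind the near-optimal test function: the weight
`(s + δ) / (r + δ)` has `P`-mean at most `b + 2 δ`, because `r² / (r + δ) ≤ r` and
`∫ r dν ≤ 2`. -/
lemma lintegral_ratio_le (P Q : Measure X) [IsProbabilityMeasure P] [IsProbabilityMeasure Q]
    {δ : ℝ} (hδ : 0 < δ) :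
    ∫⁻ x, ENNReal.ofReal ((sqrtDensity Q (P + Q) x + δ) / (sqrtDensity P (P + Q) x + δ)) ∂P ≤
      ENNReal.ofReal (affinity P Q + 2 * δ) := by
  set ν := P + Q with hν
  have hP := integral_sqrtDensity_sq P ν (absolutelyContinuous_add P Q).1
  have iP := integrable_sqrtDensity_sq P ν
  have iPQ := integrable_sqrtDensity_mul P Q ν
  have mr := measurable_sqrtDensity P ν
  have ms := measurable_sqrtDensity Q ν
  have hr := sqrtDensity_nonneg P ν
  have hs := sqrtDensity_nonneg Q ν
  rw [lintegral_eq_sqrtDensity P ν (absolutelyContinuous_add P Q).1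
    (f := fun x => (sqrtDensity Q ν x + δ) / (sqrtDensity P ν x + δ))
    ((ms.add_const δ).div (mr.add_const δ))]
  -- AM-GM in the form `r ≤ (r² + 1) / 2` bounds `∫ r dν` by `(1 + ν(X)) / 2 = 3 / 2`.
  have iC : Integrable (fun x => δ * ((sqrtDensity P ν x ^ 2 + 1) / 2)) ν :=
    ((iP.add (integrable_const 1)).div_const 2).const_mul δ
  have iB : Integrable (fun x => sqrtDensity P ν x * sqrtDensity Q ν x +
      δ * ((sqrtDensity P ν x ^ 2 + 1) / 2)) ν :=
    iPQ.add iC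
  have hint : ∫ x, (sqrtDensity P ν x * sqrtDensity Q ν x +
      δ * ((sqrtDensity P ν x ^ 2 + 1) / 2)) ∂ν ≤ affinity P Q + 2 * δ := by
    rw [integral_add iPQ iC,
      integral_const_mul, integral_div, integral_add iP (integrable_const 1), hP, integral_const]
    have : ν.real Set.univ = 2 := by
      rw [hν, measureReal_add_apply]; norm_num
    rw [this, affinity, smul_eq_mul]
    linarith
  refine le_trans ?_ (ENNReal.ofReal_le_ofReal hint)
  rw [ofReal_integral_eq_lintegral_ofReal iB (Filter.Eventually.of_forall fun x => by
    have := hr x; have := hs x; simp only [Pi.zero_apply]; positivity)]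
  refine lintegral_mono fun x => ENNReal.ofReal_le_ofReal ?_
  have h1 := hr x
  have h2 := hs x
  generalize sqrtDensity P ν x = r at *
  generalize sqrtDensity Q ν x = s at *
  calc r ^ 2 * ((s + δ) / (r + δ)) = (r ^ 2 / (r + δ)) * (s + δ) := by ring
    _ ≤ r * (s + δ) := by
      gcongr
      rw [div_le_iff₀ (by positivity)]
      nlinarith
    _ ≤ r * s + δ * ((r ^ 2 + 1) / 2) := by nlinarith [mul_nonneg hδ.le (sq_nonneg (r - 1))]

/-- Near-optimal test functions: `e^g = (s + δ) / (r + δ)` and its reciprocal both fall under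
`lintegral_ratio_le`, with the roles of `P` and `Q` exchanged. -/
lemma exists_expTest_le (P Q : Measure X) [IsProbabilityMeasure P] [IsProbabilityMeasure Q]
    {δ : ℝ} (hδ : 0 < δ) : ∃ g : X → ℝ, Measurable g ∧
      (∫⁻ x, ENNReal.ofReal (Real.exp (g x)) ∂P) *
        (∫⁻ x, ENNReal.ofReal (Real.exp (-(g x))) ∂Q) ≤
        ENNReal.ofReal ((affinity P Q + 2 * δ) ^ 2) := by
  have hr := sqrtDensity_nonneg P (P + Q)
  have hs := sqrtDensity_nonneg Q (P + Q)
  refine ⟨fun x => Real.log ((sqrtDensity Q (P + Q) x + δ) / (sqrtDensity P (P + Q) x + δ)),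
    (((measurable_sqrtDensity _ _).add_const δ).div
      ((measurable_sqrtDensity _ _).add_const δ)).log, ?_⟩
  have hpos : ∀ x, 0 < (sqrtDensity Q (P + Q) x + δ) / (sqrtDensity P (P + Q) x + δ) := fun x => by
    have := hr x; have := hs x; positivity
  have hA := lintegral_ratio_le P Q hδ
  have hB := lintegral_ratio_le Q P hδ
  rw [affinity_comm, add_comm Q P] at hB
  simp only [Real.exp_neg, Real.exp_log (hpos _), inv_div]
  have h0 : 0 ≤ affinity P Q + 2 * δ := by have := affinity_nonneg P Q; positivity
  rw [sq, ENNReal.ofReal_mul h0]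
  exact mul_le_mul' hA hB

lemma one_sub_ofReal {c : ℝ} (hc : 0 ≤ c) :
    (1 : EReal) - ((ENNReal.ofReal c : ℝ≥0∞) : EReal) = ((1 - c : ℝ) : EReal) := by
  rw [EReal.coe_ennreal_ofReal, max_eq_left hc, EReal.coe_sub, EReal.coe_one]

end

theorem hellingerSq_variational_exp {X : Type*} [MeasurableSpace X]
    (P Q : Measure X) [IsProbabilityMeasure P] [IsProbabilityMeasure Q] :
    ((2⁻¹ * hellingerSq P Q : ℝ) : EReal) ≤
        (⨆ g : {g : X → ℝ // Measurable g}, expTestValue P Q g.1) ∧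
      (⨆ g : {g : X → ℝ // Measurable g}, expTestValue P Q g.1) ≤
        ((hellingerSq P Q : ℝ) : EReal) := by
  have hb := affinity_nonneg P Q
  have hH := hellingerSq_eq P Q
  have hH0 := hellingerSq_nonneg P Q
  constructor
  · have key : ((1 - affinity P Q ^ 2 : ℝ) : EReal) ≤
        ⨆ g : {g : X → ℝ // Measurable g}, expTestValue P Q g.1 := by
      have hcont : Continuous fun δ : ℝ => ((1 - (affinity P Q + 2 * δ) ^ 2 : ℝ) : EReal) :=
        continuous_coe_real_ereal.comp (by fun_prop)
      have ht := (hcont.tendsto 0).mono_left (nhdsWithin_le_nhds (s := Set.Ioi 0))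
      simp only [mul_zero, add_zero] at ht
      -- The bound `1 - (b + 2 δ)²` holds for each `δ > 0`; let `δ` tend to `0`.
      refine le_of_tendsto ht ?_
      filter_upwards [self_mem_nhdsWithin] with δ hδ
      obtain ⟨g, hg, hle⟩ := exists_expTest_le P Q hδ
      refine le_trans ?_ (le_iSup (fun g : {g : X → ℝ // Measurable g} =>
        expTestValue P Q g.1) ⟨g, hg⟩)
      rw [← one_sub_ofReal (sq_nonneg _)]
      exact EReal.sub_le_sub le_rfl (EReal.coe_ennreal_le_coe_ennreal_iff.2 hle)
    -- `(1 - b²) - H² / 2 = (1 - b) b`, and `b ≤ 1` since `H² ≥ 0`.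
    exact (EReal.coe_le_coe_iff.2 (by nlinarith)).trans key
  · refine iSup_le fun g => ?_
    calc expTestValue P Q g.1
        ≤ 1 - ((ENNReal.ofReal (affinity P Q ^ 2) : ℝ≥0∞) : EReal) :=
          EReal.sub_le_sub le_rfl
            (EReal.coe_ennreal_le_coe_ennreal_iff.2 (sq_affinity_le P Q g.2))
      _ = ((1 - affinity P Q ^ 2 : ℝ) : EReal) := one_sub_ofReal (sq_nonneg _)
      _ ≤ ((hellingerSq P Q : ℝ) : EReal) := EReal.coe_le_coe_iff.2 (by
          -- `1 - b² ≤ 2 - 2 b` is `0 ≤ (1 - b)²`.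
          nlinarith [sq_nonneg (1 - affinity P Q)])
end

section
/- Let P and Q be probability measures on a measurable space (X, 𝓕). Then for every α ≥ 1, (1/2)·H²(P,Q) ≤ sup over measurable functions g : X → ℝ with ‖g‖_∞ ≤ α of (1 − E_P[e^{g}] · E_Q[e^{−g}]) + 4·e^{−α}. -/
/-!
Write `p`, `q` for the densities of `P`, `Q` with respect to `P + Q` and `A = ∫ √p √q`, so that
`H² / 2 = 1 - A`. The unconstrained optimal test is `g = log (√q / √p)`, for which both
`E_P[e^g]` and `E_Q[e^{-g}]` equal `A` when `p` and `q` are positive.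

Clipping this `g` to `[-α, α]` costs little: clipping from above only decreases `p e^g`, and
clipping from below replaces it by `e^{-α} p`, so `p e^g ≤ √p √q + e^{-α} p`, and symmetrically
`q e^{-g} ≤ √p √q + e^{-α} q`. Integrating, the product of expectations is at most
`(A + e^{-α})² ≤ A + 3 e^{-α}`, because `0 ≤ A ≤ 1`.
-/

open MeasureTheory
open scoped ENNReal

/-- The clipped test function `log (√q / √p)`, truncated to `[-α, α]`. The case `p = 0` is
separated because there the quotient should be `+∞`, whereas division by zero returns `0`. -/
noncomputable def clippedTest (α p q : ℝ) : ℝ :=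
  if p = 0 then α else
    Real.log (max (Real.exp (-α)) (min (Real.exp α) (Real.sqrt q / Real.sqrt p)))

lemma abs_clippedTest_le {α : ℝ} (hα : 0 ≤ α) (p q : ℝ) : |clippedTest α p q| ≤ α := by
  unfold clippedTest
  split_ifs with h
  · rw [abs_of_nonneg hα]
  · set u := max (Real.exp (-α)) (min (Real.exp α) (Real.sqrt q / Real.sqrt p)) with hu
    have h1 : Real.exp (-α) ≤ u := le_max_left _ _
    have h2 : u ≤ Real.exp α :=
      max_le (Real.exp_le_exp.2 (by linarith)) (min_le_left _ _)
    have hpos : 0 < u := lt_of_lt_of_le (Real.exp_pos _) h1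
    rw [abs_le]
    exact ⟨(Real.le_log_iff_exp_le hpos).2 h1, (Real.log_le_iff_le_exp hpos).2 h2⟩

lemma measurable_clippedTest (α : ℝ) {X : Type*} [MeasurableSpace X] {p q : X → ℝ}
    (hp : Measurable p) (hq : Measurable q) :
    Measurable fun x => clippedTest α (p x) (q x) := by
  unfold clippedTest
  refine Measurable.ite (hp (measurableSet_singleton 0)) measurable_const ?_
  fun_prop

lemma mul_exp_clippedTest_le (α : ℝ) {p q : ℝ} (hp : 0 ≤ p) :
    p * Real.exp (clippedTest α p q) ≤
      Real.sqrt p * Real.sqrt q + Real.exp (-α) * p := by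
  have he := Real.exp_pos (-α)
  have hs : 0 ≤ Real.sqrt p * Real.sqrt q := by positivity
  unfold clippedTest
  split_ifs with h
  · simp [h]
  · have hp' : 0 < Real.sqrt p := Real.sqrt_pos.2 (lt_of_le_of_ne hp (Ne.symm h))
    rw [Real.exp_log (lt_of_lt_of_le he (le_max_left _ _)), mul_max_of_nonneg _ _ hp]
    refine max_le (by nlinarith) ?_
    calc p * min (Real.exp α) (Real.sqrt q / Real.sqrt p)
        ≤ p * (Real.sqrt q / Real.sqrt p) := by gcongr; exact min_le_right _ _
      _ = Real.sqrt p * Real.sqrt q := by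
        nth_rewrite 1 [← Real.mul_self_sqrt hp]
        field_simp
      _ ≤ _ := by nlinarith

lemma mul_exp_neg_clippedTest_le (α : ℝ) {p q : ℝ} (hp : 0 ≤ p) (hq : 0 ≤ q) :
    q * Real.exp (-clippedTest α p q) ≤
      Real.sqrt p * Real.sqrt q + Real.exp (-α) * q := by
  have he := Real.exp_pos (-α)
  have hs : 0 ≤ Real.sqrt p * Real.sqrt q := by positivity
  unfold clippedTest
  split_ifs with h
  · simp [h, mul_comm]
  · have hp' : 0 < Real.sqrt p := Real.sqrt_pos.2 (lt_of_le_of_ne hp (Ne.symm h))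
    set m := min (Real.exp α) (Real.sqrt q / Real.sqrt p) with hm
    have hpos := lt_of_lt_of_le he (le_max_left (Real.exp (-α)) m)
    rw [Real.exp_neg, Real.exp_log hpos, ← div_eq_mul_inv, div_le_iff₀ hpos]
    have hB : 0 ≤ Real.sqrt p * Real.sqrt q + Real.exp (-α) * q := by positivity
    refine le_trans ?_ (mul_le_mul_of_nonneg_left (le_max_right (Real.exp (-α)) m) hB)
    rcases min_choice (Real.exp α) (Real.sqrt q / Real.sqrt p) with h1 | h1
    · rw [hm, h1]
      have h2 : Real.exp (-α) * Real.exp α = 1 := by rw [← Real.exp_add]; simp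
      have h3 := Real.exp_pos α
      nlinarith [mul_nonneg hs h3.le]
    · rw [hm, h1]
      have h2 : Real.sqrt p * Real.sqrt q * (Real.sqrt q / Real.sqrt p) = q := by
        nth_rewrite 3 [← Real.mul_self_sqrt hq]
        field_simp
      have h3 : 0 ≤ Real.exp (-α) * q * (Real.sqrt q / Real.sqrt p) := by positivity
      linarith

/-- Integrates a pointwise bound on the density times `e^f`. -/
lemma lintegral_exp_le {X : Type*} [MeasurableSpace X] {P ν : Measure X}
    [IsProbabilityMeasure P] [IsFiniteMeasure ν] (hP : P ≪ ν) {f s : X → ℝ}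
    (hf : Measurable f) (hs : Integrable s ν) (hs0 : ∀ x, 0 ≤ s x) {c : ℝ} (hc : 0 ≤ c)
    (h : ∀ x, (P.rnDeriv ν x).toReal * Real.exp (f x) ≤ s x + c * (P.rnDeriv ν x).toReal) :
    ∫⁻ x, ENNReal.ofReal (Real.exp (f x)) ∂P ≤ ENNReal.ofReal (∫ x, s x ∂ν + c) := by
  have hi : Integrable (fun x => (P.rnDeriv ν x).toReal) ν := Measure.integrable_toReal_rnDeriv
  have h1 : ∫ x, (P.rnDeriv ν x).toReal ∂ν = 1 := by
    rw [Measure.integral_toReal_rnDeriv hP]; simp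
  have h2 : ∫ x, s x + c * (P.rnDeriv ν x).toReal ∂ν = ∫ x, s x ∂ν + c := by
    rw [integral_add hs (hi.const_mul c), integral_const_mul, h1, mul_one]
  have h3 : Integrable (fun x => s x + c * (P.rnDeriv ν x).toReal) ν := hs.add (hi.const_mul c)
  rw [← lintegral_rnDeriv_mul hP (by fun_prop), ← h2,
    ofReal_integral_eq_lintegral_ofReal h3
      (ae_of_all _ fun x => add_nonneg (hs0 x) (mul_nonneg hc ENNReal.toReal_nonneg))]
  refine lintegral_mono_ae ?_
  filter_upwards [Measure.rnDeriv_lt_top P ν] with x hx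
  calc P.rnDeriv ν x * ENNReal.ofReal (Real.exp (f x))
      = ENNReal.ofReal ((P.rnDeriv ν x).toReal * Real.exp (f x)) := by
        rw [ENNReal.ofReal_mul ENNReal.toReal_nonneg, ENNReal.ofReal_toReal hx.ne]
    _ ≤ _ := ENNReal.ofReal_le_ofReal (h x)

theorem hellingerSq_variational_exp_bounded {X : Type*} [MeasurableSpace X]
    (P Q : Measure X) [IsProbabilityMeasure P] [IsProbabilityMeasure Q]
    (α : ℝ) (hα : 1 ≤ α) :
    ((2⁻¹ * hellingerSq P Q : ℝ) : EReal) ≤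
      (⨆ g : {g : X → ℝ // Measurable g ∧ ∀ x, |g x| ≤ α}, expTestValue P Q g.1)
        + ((4 * Real.exp (-α) : ℝ) : EReal) := by
  have hPν : P ≪ P + Q := Measure.AbsolutelyContinuous.rfl.add_right Q
  have hQν : Q ≪ P + Q := by
    rw [add_comm]; exact Measure.AbsolutelyContinuous.rfl.add_right P
  set p : X → ℝ := fun x => (P.rnDeriv (P + Q) x).toReal with hp
  set q : X → ℝ := fun x => (Q.rnDeriv (P + Q) x).toReal with hq
  have hpm : Measurable p := (Measure.measurable_rnDeriv _ _).ennreal_toReal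
  have hqm : Measurable q := (Measure.measurable_rnDeriv _ _).ennreal_toReal
  have hp0 : ∀ x, 0 ≤ p x := fun x => ENNReal.toReal_nonneg
  have hq0 : ∀ x, 0 ≤ q x := fun x => ENNReal.toReal_nonneg
  have hpi : Integrable p (P + Q) := Measure.integrable_toReal_rnDeriv
  have hqi : Integrable q (P + Q) := Measure.integrable_toReal_rnDeriv
  have hp1 : ∫ x, p x ∂(P + Q) = 1 := by
    rw [hp, Measure.integral_toReal_rnDeriv hPν]; simp
  have hq1 : ∫ x, q x ∂(P + Q) = 1 := by
    rw [hq, Measure.integral_toReal_rnDeriv hQν]; simp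
  set s : X → ℝ := fun x => Real.sqrt (p x) * Real.sqrt (q x) with hs
  have hs0 : ∀ x, 0 ≤ s x := fun x => by positivity
  have hsi : Integrable s (P + Q) := by
    refine (hpi.add hqi).mono' (by fun_prop) (ae_of_all _ fun x => ?_)
    rw [Real.norm_of_nonneg (hs0 x)]
    simp only [hs, Pi.add_apply]
    nlinarith [Real.mul_self_sqrt (hp0 x), Real.mul_self_sqrt (hq0 x),
      sq_nonneg (Real.sqrt (p x) - Real.sqrt (q x)), hp0 x, hq0 x]
  set A := ∫ x, s x ∂(P + Q) with hA
  have hA0 : 0 ≤ A := integral_nonneg hs0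
  have hH : hellingerSq P Q = 2 - 2 * A := by
    have : hellingerSq P Q = ∫ x, (p x + q x) - 2 * s x ∂(P + Q) := by
      unfold hellingerSq
      congr 1
      funext x
      have h1 := Real.mul_self_sqrt (hp0 x)
      have h2 := Real.mul_self_sqrt (hq0 x)
      simp only [hp, hq, hs] at h1 h2 ⊢
      linear_combination h1 + h2
    have hpq : Integrable (fun x => p x + q x) (P + Q) := hpi.add hqi
    rw [this, integral_sub hpq (hsi.const_mul 2), integral_add hpi hqi,
      integral_const_mul, hp1, hq1]
    ring
  have hA1 : A ≤ 1 := by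
    have : 0 ≤ hellingerSq P Q := integral_nonneg fun x => sq_nonneg _
    linarith
  set ε := Real.exp (-α) with hε
  have hε0 : 0 < ε := Real.exp_pos _
  have hε1 : ε ≤ 1 := Real.exp_le_one_iff.2 (by linarith)
  set g : X → ℝ := fun x => clippedTest α (p x) (q x) with hg
  have hgm : Measurable g := measurable_clippedTest α hpm hqm
  have hgα : ∀ x, |g x| ≤ α := fun x => abs_clippedTest_le (by linarith) _ _
  have hP : ∫⁻ x, ENNReal.ofReal (Real.exp (g x)) ∂P ≤ ENNReal.ofReal (A + ε) :=
    lintegral_exp_le hPν hgm hsi hs0 hε0.le fun x => mul_exp_clippedTest_le α (hp0 x)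
  have hQ : ∫⁻ x, ENNReal.ofReal (Real.exp (-g x)) ∂Q ≤ ENNReal.ofReal (A + ε) :=
    lintegral_exp_le hQν hgm.neg hsi hs0 hε0.le
      fun x => mul_exp_neg_clippedTest_le α (hp0 x) (hq0 x)
  have hval : ((1 - (A + ε) * (A + ε) : ℝ) : EReal) ≤ expTestValue P Q g := by
    unfold expTestValue
    have h1 := mul_le_mul' hP hQ
    rw [← ENNReal.ofReal_mul (by positivity)] at h1
    have h2 := EReal.coe_ennreal_le_coe_ennreal_iff.2 h1
    rw [EReal.coe_ennreal_ofReal, max_eq_left (by positivity)] at h2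
    rw [EReal.coe_sub]
    exact EReal.sub_le_sub le_rfl h2
  calc ((2⁻¹ * hellingerSq P Q : ℝ) : EReal)
      ≤ ((1 - (A + ε) * (A + ε) + 4 * ε : ℝ) : EReal) := by
        rw [EReal.coe_le_coe_iff, hH]
        nlinarith
    _ = ((1 - (A + ε) * (A + ε) : ℝ) : EReal) + ((4 * ε : ℝ) : EReal) := EReal.coe_add _ _
    _ ≤ _ := by
        gcongr
        exact hval.trans (le_iSup
          (fun g : {g : X → ℝ // Measurable g ∧ ∀ x, |g x| ≤ α} => expTestValue P Q g.1)
          ⟨g, hgm, hgα⟩)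
end

section
/- Let P and Q be probability measures on a measurable space (X, 𝓕). Then the chi-squared divergence of P with respect to the mixture (P+Q)/2 satisfies D_{χ²}(P ‖ (P+Q)/2) ≤ H²(P,Q). -/
/-!
Write `p`, `q` for the densities of `P`, `Q` with respect to `P + Q`, so that `p + q = 1` almost
everywhere. With respect to the mixture `(P + Q) / 2` the density of `P` is `2 * p`, and
`(2 * p - 1) ^ 2 = (p - q) ^ 2 = (√p - √q) ^ 2 * (√p + √q) ^ 2`, where
`(√p + √q) ^ 2 ≤ 2 * (p + q) = 2`. The factor `1 / 2` in the mixture cancels this `2`, so the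
inequality holds already between the integrands (`sq_two_mul_sub_one_le`).
-/

open MeasureTheory
open scoped ENNReal

/-- Pointwise form of the comparison between the chi-squared and the Hellinger integrands. -/
lemma sq_two_mul_sub_one_le {p q : ℝ} (hp : 0 ≤ p) (hq : 0 ≤ q) (h : p + q = 1) :
    (2 * p - 1) ^ 2 ≤ 2 * (Real.sqrt p - Real.sqrt q) ^ 2 := by
  have h1 := Real.sq_sqrt hp
  have h2 := Real.sq_sqrt hq
  set a := Real.sqrt p
  set b := Real.sqrt q
  have h3 : 2 * p - 1 = (a - b) * (a + b) := by linear_combination -h1 + h2 + h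
  rw [h3, mul_pow, mul_comm (2 : ℝ)]
  gcongr
  nlinarith [sq_nonneg (a - b)]

lemma rnDeriv_add_rnDeriv_toReal {X : Type*} [MeasurableSpace X]
    (P Q : Measure X) [IsFiniteMeasure P] [IsFiniteMeasure Q] :
    ∀ᵐ x ∂(P + Q), (P.rnDeriv (P + Q) x).toReal + (Q.rnDeriv (P + Q) x).toReal = 1 := by
  filter_upwards [Measure.rnDeriv_add' P Q (P + Q), Measure.rnDeriv_self (P + Q),
    Measure.rnDeriv_ne_top P (P + Q), Measure.rnDeriv_ne_top Q (P + Q)] with x h1 h2 h3 h4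
  rw [← ENNReal.toReal_add h3 h4]
  rw [h2, Pi.add_apply] at h1
  simp [← h1]

/-- The chi-squared divergence of `P` with respect to the mixture `(P + Q) / 2` is at most
the squared Hellinger distance between `P` and `Q`. -/
theorem chiSq_mixture_le_hellingerSq {X : Type*} [MeasurableSpace X]
    (P Q : Measure X) [IsProbabilityMeasure P] [IsProbabilityMeasure Q] :
    (∫⁻ x, ENNReal.ofReal
        (((P.rnDeriv ((2⁻¹ : ℝ≥0∞) • P + (2⁻¹ : ℝ≥0∞) • Q) x).toReal - 1) ^ 2)
        ∂((2⁻¹ : ℝ≥0∞) • P + (2⁻¹ : ℝ≥0∞) • Q)) ≤ ENNReal.ofReal (hellingerSq P Q) := by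
  have hsum := rnDeriv_add_rnDeriv_toReal P Q
  have hint : Integrable (fun x => (Real.sqrt ((P.rnDeriv (P + Q) x).toReal)
      - Real.sqrt ((Q.rnDeriv (P + Q) x).toReal)) ^ 2) (P + Q) := by
    refine Integrable.of_bound (C := 1) (Measurable.aestronglyMeasurable (by fun_prop)) ?_
    filter_upwards [hsum] with x hx
    rw [Real.norm_of_nonneg (sq_nonneg _)]
    nlinarith [Real.sq_sqrt (ENNReal.toReal_nonneg (a := P.rnDeriv (P + Q) x)),
      Real.sq_sqrt (ENNReal.toReal_nonneg (a := Q.rnDeriv (P + Q) x)),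
      mul_nonneg (Real.sqrt_nonneg (P.rnDeriv (P + Q) x).toReal)
        (Real.sqrt_nonneg (Q.rnDeriv (P + Q) x).toReal)]
  rw [hellingerSq, ofReal_integral_eq_lintegral_ofReal hint (ae_of_all _ fun _ => sq_nonneg _),
    ← smul_add, lintegral_smul_measure, smul_eq_mul, ← lintegral_const_mul' _ _ (by simp)]
  refine lintegral_mono_ae ?_
  filter_upwards [hsum, Measure.rnDeriv_smul_right_of_ne_top' P (P + Q)
    (r := (2⁻¹ : ℝ≥0∞)) (by simp) (by simp)] with x hx h
  have h2 : (2⁻¹ : ℝ≥0∞) = ENNReal.ofReal (1 / 2) := by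
    rw [one_div, ENNReal.ofReal_inv_of_pos two_pos]; simp
  have hd : (P.rnDeriv ((2⁻¹ : ℝ≥0∞) • (P + Q)) x).toReal
      = 2 * (P.rnDeriv (P + Q) x).toReal := by
    rw [h]; simp
  rw [hd, h2, ← ENNReal.ofReal_mul (by norm_num)]
  refine ENNReal.ofReal_le_ofReal ?_
  linarith [sq_two_mul_sub_one_le ENNReal.toReal_nonneg ENNReal.toReal_nonneg hx]
end

section
/- Let P and Q be probability measures on a measurable space (X, 𝓕). Then H²(P,Q) = sup over measurable functions h : X → (0, ∞) of ( 2 − E_P[h] − E_Q[1/h] ), where E_P[h] and E_Q[1/h] take values in (0, ∞] and a term in which either expectation is infinite is interpreted as −∞ inside the supremum. -/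
/-!
Let `ν = P + Q`, and let `p`, `q` be the densities of `P`, `Q` with respect to `ν`. Expanding the
square gives `H²(P, Q) = 2 - 2 ∫ √p √q dν`, while `E_P[h] + E_Q[1/h] = ∫ (p h + q / h) dν`.

By the inequality of arithmetic and geometric means, `2 √p √q ≤ p h + q / h` pointwise, so no test
function exceeds `H²`. Equality would require `h = √(q / p)`, which may vanish or be undefined; the
regularisation `h = √((q + t²) / (p + t²))` with `t > 0` is an admissible test function for which
`p h + q / h ≤ 2 √p √q + t (2 + p + q)`, so its value is at least `H² - 6 t`. Letting `t → 0` shows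
that the supremum is `H²`.
-/

open MeasureTheory
open scoped ENNReal

/-- The value `2 - E_P[h] - E_Q[1/h]` as an extended real: if either expectation is
infinite, the value is `⊥ = -∞`. -/
noncomputable def invTestValue {X : Type*} [MeasurableSpace X] (P Q : Measure X)
    (h : X → ℝ) : EReal :=
  (2 : EReal) - ((∫⁻ x, ENNReal.ofReal (h x) ∂P : ℝ≥0∞) : EReal)
    - ((∫⁻ x, ENNReal.ofReal ((h x)⁻¹) ∂Q : ℝ≥0∞) : EReal)

/-- The density of `P` with respect to `P + Q`, as a real-valued function. -/
noncomputable def dens {X : Type*} [MeasurableSpace X] (P Q : Measure X) (x : X) : ℝ :=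
  (P.rnDeriv (P + Q) x).toReal

/-- The density of `Q` with respect to `P + Q`, as a real-valued function. -/
noncomputable def dens' {X : Type*} [MeasurableSpace X] (P Q : Measure X) (x : X) : ℝ :=
  (Q.rnDeriv (P + Q) x).toReal

lemma two_sqrt_mul_le {p q h : ℝ} (hp : 0 ≤ p) (hq : 0 ≤ q) (hh : 0 < h) :
    2 * (√p * √q) ≤ p * h + q * h⁻¹ := by
  have h1 : √p * √h * (√q * √h⁻¹) = √p * √q := by
    have : √h * √h⁻¹ = 1 := by
      rw [← Real.sqrt_mul hh.le, mul_inv_cancel₀ hh.ne', Real.sqrt_one]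
    linear_combination √p * √q * this
  have h2 := sq_nonneg (√p * √h - √q * √h⁻¹)
  have e1 : (√p * √h) ^ 2 = p * h := by rw [mul_pow, Real.sq_sqrt hp, Real.sq_sqrt hh.le]
  have e2 : (√q * √h⁻¹) ^ 2 = q * h⁻¹ := by
    rw [mul_pow, Real.sq_sqrt hq, Real.sq_sqrt (inv_pos.2 hh).le]
  nlinarith

/-- Follows from `√p ≤ √(p + t²)`, `√(q + t²) ≤ √q + t` and `√p ≤ 1 + p`. The roles of `p` and `q`
are exchanged to bound the term `q / h` of the regularised test function `h`. -/
lemma mul_sqrt_reg_le {p q t : ℝ} (hp : 0 ≤ p) (hq : 0 ≤ q) (ht : 0 < t) :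
    p * √((q + t ^ 2) / (p + t ^ 2)) ≤ √p * √q + t * (1 + p) := by
  have ha : 0 < √(p + t ^ 2) := Real.sqrt_pos.2 (by positivity)
  have hpa : √p ≤ √(p + t ^ 2) := Real.sqrt_le_sqrt (by nlinarith)
  have hb : √(q + t ^ 2) ≤ √q + t := by
    rw [Real.sqrt_le_left (by positivity)]
    nlinarith [Real.sq_sqrt hq, mul_nonneg (Real.sqrt_nonneg q) ht.le]
  have hs := Real.sq_sqrt hp
  have hs0 := Real.sqrt_nonneg p
  have h1 : p * √((q + t ^ 2) / (p + t ^ 2)) ≤ √p * √(q + t ^ 2) := by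
    rw [Real.sqrt_div (by positivity), mul_div_assoc', div_le_iff₀ ha]
    have : p ≤ √p * √(p + t ^ 2) := by nlinarith
    nlinarith [mul_le_mul_of_nonneg_right this (Real.sqrt_nonneg (q + t ^ 2))]
  have h2 : √p ≤ 1 + p := by nlinarith [sq_nonneg (√p - 1)]
  nlinarith [mul_le_mul_of_nonneg_left hb hs0, mul_le_mul_of_nonneg_left h2 ht.le]

/-- If `A` or `B` is infinite, the left-hand side is `⊥`. -/
lemma two_sub_sub_le {A B : ℝ≥0∞} {c : ℝ} (h : ENNReal.ofReal c ≤ A + B) :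
    (2 : EReal) - (A : EReal) - (B : EReal) ≤ ((2 - c : ℝ) : EReal) := by
  induction A with
  | top => simp
  | coe a =>
    induction B with
    | top => simp
    | coe b =>
      have h' : c ≤ a + b := by
        rw [← ENNReal.coe_add, ENNReal.ofReal_le_iff_le_toReal ENNReal.coe_ne_top,
          ENNReal.coe_toReal, NNReal.coe_add] at h
        exact h
      change ((2 : ℝ) : EReal) - ((a : ℝ) : EReal) - ((b : ℝ) : EReal) ≤ _
      norm_cast
      linarith

lemma le_two_sub_sub {A B : ℝ≥0∞} {c : ℝ} (hc : 0 ≤ c) (h : A + B ≤ ENNReal.ofReal c) :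
    ((2 - c : ℝ) : EReal) ≤ (2 : EReal) - (A : EReal) - (B : EReal) := by
  have hAB : A + B ≠ ⊤ := ne_top_of_le_ne_top ENNReal.ofReal_ne_top h
  lift A to NNReal using (ENNReal.add_ne_top.1 hAB).1
  lift B to NNReal using (ENNReal.add_ne_top.1 hAB).2
  have h' : (A : ℝ) + B ≤ c := by
    rw [← ENNReal.coe_add] at h
    simpa only [ENNReal.coe_toReal, NNReal.coe_add] using ENNReal.toReal_le_of_le_ofReal hc h
  change _ ≤ ((2 : ℝ) : EReal) - ((A : ℝ) : EReal) - ((B : ℝ) : EReal)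
  norm_cast
  linarith

section Density

variable {X : Type*} [MeasurableSpace X]

lemma lintegral_eq_rnDeriv_toReal_mul {μ ν : Measure X} [IsFiniteMeasure μ] [IsFiniteMeasure ν]
    (hμν : μ ≪ ν) {h : X → ℝ} (hm : Measurable h) :
    ∫⁻ x, ENNReal.ofReal (h x) ∂μ = ∫⁻ x, ENNReal.ofReal ((μ.rnDeriv ν x).toReal * h x) ∂ν := by
  rw [← lintegral_rnDeriv_mul hμν hm.ennreal_ofReal.aemeasurable]
  refine lintegral_congr_ae ?_
  filter_upwards [μ.rnDeriv_lt_top ν] with x hx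
  rw [ENNReal.ofReal_mul ENNReal.toReal_nonneg, ENNReal.ofReal_toReal hx.ne]

variable (P Q : Measure X)

lemma measurable_dens : Measurable (dens P Q) := (P.measurable_rnDeriv _).ennreal_toReal

lemma measurable_dens' : Measurable (dens' P Q) := (Q.measurable_rnDeriv _).ennreal_toReal

lemma dens_nonneg (x : X) : 0 ≤ dens P Q x := ENNReal.toReal_nonneg

lemma dens'_nonneg (x : X) : 0 ≤ dens' P Q x := ENNReal.toReal_nonneg

lemma absCont_left : P ≪ P + Q := (Measure.le_add_right le_rfl).absolutelyContinuous

lemma absCont_right : Q ≪ P + Q := (Measure.le_add_left le_rfl).absolutelyContinuous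

lemma integrable_dens [IsProbabilityMeasure P] : Integrable (dens P Q) (P + Q) :=
  Measure.integrable_toReal_rnDeriv

lemma integrable_dens' [IsProbabilityMeasure Q] : Integrable (dens' P Q) (P + Q) :=
  Measure.integrable_toReal_rnDeriv

/-- The regularisation of the formal optimiser `√(q / p)`; it is everywhere positive when
`t ≠ 0`. -/
noncomputable def regTest (t : ℝ) (x : X) : ℝ :=
  √((dens' P Q x + t ^ 2) / (dens P Q x + t ^ 2))

lemma measurable_regTest (t : ℝ) : Measurable (regTest P Q t) :=
  (((measurable_dens' P Q).add_const _).div ((measurable_dens P Q).add_const _)).sqrt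

lemma regTest_pos {t : ℝ} (ht : 0 < t) (x : X) : 0 < regTest P Q t x := by
  have hp := dens_nonneg P Q x
  have hq := dens'_nonneg P Q x
  exact Real.sqrt_pos.2 (by positivity)

variable [IsProbabilityMeasure P] [IsProbabilityMeasure Q]

lemma integral_dens : ∫ x, dens P Q x ∂(P + Q) = 1 := by
  simp [dens, Measure.integral_toReal_rnDeriv (absCont_left P Q)]

lemma integral_dens' : ∫ x, dens' P Q x ∂(P + Q) = 1 := by
  simp [dens', Measure.integral_toReal_rnDeriv (absCont_right P Q)]

lemma integrable_sqrt_mul_sqrt :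
    Integrable (fun x => √(dens P Q x) * √(dens' P Q x)) (P + Q) := by
  refine ((integrable_dens P Q).add (integrable_dens' P Q)).mono'
    ((measurable_dens P Q).sqrt.mul (measurable_dens' P Q).sqrt).aestronglyMeasurable
    (ae_of_all _ fun x => ?_)
  have hp := Real.sq_sqrt (dens_nonneg P Q x)
  have hq := Real.sq_sqrt (dens'_nonneg P Q x)
  rw [Real.norm_of_nonneg (by positivity), Pi.add_apply]
  nlinarith [sq_nonneg (√(dens P Q x) - √(dens' P Q x)), dens_nonneg P Q x, dens'_nonneg P Q x]

/-- The Hellinger distance in terms of the affinity `∫ √p √q dν`. -/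
lemma hellingerSq_eq_s4 :
    hellingerSq P Q = 2 - 2 * ∫ x, √(dens P Q x) * √(dens' P Q x) ∂(P + Q) := by
  have e : ∀ x, (√((P.rnDeriv (P + Q) x).toReal) - √((Q.rnDeriv (P + Q) x).toReal)) ^ 2
      = (dens P Q x + dens' P Q x) - 2 * (√(dens P Q x) * √(dens' P Q x)) := by
    intro x
    have hp := Real.sq_sqrt (dens_nonneg P Q x)
    have hq := Real.sq_sqrt (dens'_nonneg P Q x)
    change (√(dens P Q x) - √(dens' P Q x)) ^ 2 = _
    linear_combination hp + hq
  have hp := integrable_dens P Q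
  have hq := integrable_dens' P Q
  have hpq : Integrable (fun x => dens P Q x + dens' P Q x) (P + Q) := hp.add hq
  have hr := (integrable_sqrt_mul_sqrt P Q).const_mul 2
  rw [hellingerSq, integral_congr_ae (ae_of_all _ e), integral_sub hpq hr,
    integral_add hp hq, integral_dens, integral_dens', integral_const_mul]
  norm_num

/-- Both expectations of a test function, written as a single integral against `ν = P + Q`. -/
lemma lintegral_add_eq {h : X → ℝ} (hm : Measurable h) (hh : ∀ x, 0 < h x) :
    ∫⁻ x, ENNReal.ofReal (h x) ∂P + ∫⁻ x, ENNReal.ofReal (h x)⁻¹ ∂Q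
      = ∫⁻ x, ENNReal.ofReal (dens P Q x * h x + dens' P Q x * (h x)⁻¹) ∂(P + Q) := by
  have hpm : Measurable (fun x => ENNReal.ofReal ((P.rnDeriv (P + Q) x).toReal * h x)) :=
    ((measurable_dens P Q).mul hm).ennreal_ofReal
  rw [lintegral_eq_rnDeriv_toReal_mul (absCont_left P Q) hm,
    lintegral_eq_rnDeriv_toReal_mul (absCont_right P Q) (h := fun x => (h x)⁻¹) hm.inv,
    ← lintegral_add_left hpm]
  refine lintegral_congr fun x => ?_
  exact (ENNReal.ofReal_add (mul_nonneg (dens_nonneg P Q x) (hh x).le)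
    (mul_nonneg (dens'_nonneg P Q x) (inv_pos.2 (hh x)).le)).symm

lemma invTestValue_le {h : X → ℝ} (hm : Measurable h) (hh : ∀ x, 0 < h x) :
    invTestValue P Q h ≤ (hellingerSq P Q : EReal) := by
  rw [hellingerSq_eq_s4]
  refine two_sub_sub_le ?_
  rw [lintegral_add_eq P Q hm hh, ← integral_const_mul,
    ofReal_integral_eq_lintegral_ofReal ((integrable_sqrt_mul_sqrt P Q).const_mul 2)
      (ae_of_all _ fun x => by simp only [Pi.zero_apply]; positivity)]
  exact lintegral_mono fun x => ENNReal.ofReal_le_ofReal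
    (two_sqrt_mul_le (dens_nonneg P Q x) (dens'_nonneg P Q x) (hh x))

lemma le_invTestValue_regTest {t : ℝ} (ht : 0 < t) :
    ((hellingerSq P Q - 6 * t : ℝ) : EReal) ≤ invTestValue P Q (regTest P Q t) := by
  have hp := integrable_dens P Q
  have hq := integrable_dens' P Q
  have hr := (integrable_sqrt_mul_sqrt P Q).const_mul 2
  have h1 := (integrable_const (μ := P + Q) (2 : ℝ))
  have h2 : Integrable (fun x => 2 + dens P Q x) (P + Q) := h1.add hp
  have h3 : Integrable (fun x => 2 + dens P Q x + dens' P Q x) (P + Q) := h2.add hq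
  have hi : Integrable (fun x => 2 * (√(dens P Q x) * √(dens' P Q x))
      + t * (2 + dens P Q x + dens' P Q x)) (P + Q) := hr.add (h3.const_mul t)
  -- The total mass of `P + Q` is `2`, so the error term `t (2 + p + q)` integrates to `6 t`.
  have hint : ∫ x, (2 * (√(dens P Q x) * √(dens' P Q x))
        + t * (2 + dens P Q x + dens' P Q x)) ∂(P + Q)
      = 2 * (∫ x, √(dens P Q x) * √(dens' P Q x) ∂(P + Q)) + 6 * t := by
    rw [integral_add hr (h3.const_mul t), integral_const_mul,
      integral_const_mul, integral_add h2 hq, integral_add h1 hp, integral_dens,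
      integral_dens', integral_const, measureReal_add_apply]
    simp only [probReal_univ, smul_eq_mul]
    ring
  have hnn : ∀ x, 0 ≤ 2 * (√(dens P Q x) * √(dens' P Q x))
      + t * (2 + dens P Q x + dens' P Q x) := fun x => by
    have := dens_nonneg P Q x
    have := dens'_nonneg P Q x
    positivity
  rw [hellingerSq_eq_s4, sub_sub, ← hint]
  refine le_two_sub_sub (integral_nonneg hnn) ?_
  rw [lintegral_add_eq P Q (measurable_regTest P Q t) (regTest_pos P Q ht),
    ofReal_integral_eq_lintegral_ofReal hi (ae_of_all _ hnn)]
  refine lintegral_mono fun x => ENNReal.ofReal_le_ofReal ?_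
  have a := mul_sqrt_reg_le (dens_nonneg P Q x) (dens'_nonneg P Q x) ht
  have b := mul_sqrt_reg_le (dens'_nonneg P Q x) (dens_nonneg P Q x) ht
  rw [regTest, ← Real.sqrt_inv, inv_div]
  linarith

end Density

theorem hellingerSq_eq_sup_invTest {X : Type*} [MeasurableSpace X]
    (P Q : Measure X) [IsProbabilityMeasure P] [IsProbabilityMeasure Q] :
    ((hellingerSq P Q : ℝ) : EReal) =
      ⨆ h : {h : X → ℝ // Measurable h ∧ ∀ x, 0 < h x}, invTestValue P Q h.1 := by
  apply le_antisymm
  · rw [← EReal.ge_of_forall_gt_iff_ge]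
    intro z hz
    have hz' : z < hellingerSq P Q := by exact_mod_cast hz
    have ht : 0 < (hellingerSq P Q - z) / 6 := by linarith
    refine le_trans ?_ (le_iSup (fun h : {h : X → ℝ // Measurable h ∧ ∀ x, 0 < h x} =>
      invTestValue P Q h.1) ⟨regTest P Q _, measurable_regTest P Q _, regTest_pos P Q ht⟩)
    refine le_trans (le_of_eq ?_) (le_invTestValue_regTest P Q ht)
    congr 1
    ring
  · exact iSup_le fun h => invTestValue_le P Q h.2.1 h.2.2
end

section
/- Let f : (0, ∞) → ℝ be a convex function, and let (X, Y) be a pair of random variables on a probability space taking values in standard Borel spaces, with joint law P_{X,Y}, marginal laws P_X and P_Y, and regular conditional distributions P_{Y|X=x} and P_{X|Y=y}. Then E_{x ∼ P_X}[ D_f( P_{Y|X=x} ‖ P_Y ) ] = E_{y ∼ P_Y}[ D_f( P_{X|Y=y} ‖ P_X ) ], where both sides are allowed to equal +∞. -/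
/-!
Write `μ = P_X`, `ν = P_Y` and let `ρ` be the joint law. The integrand
`h = f (dρ/d(μ × ν))` on the product space is symmetric in the two variables, and both sides of
the identity are equal to `∫ h d(μ × ν)`, read as `+∞` when `h` is not integrable.

Two facts give this. First, for `μ`-almost every `x` the section of `dρ/d(μ × ν)` at `x` is the
density of the absolutely continuous part of `P_{Y|X=x}` with respect to `ν`
(`rnDeriv_compProd_prod`): the singular parts of the conditional laws assemble to a measure
singular to `μ × ν`, so no absolute continuity is required. Second, a convex function on `(0, ∞)`
has an affine minorant, so `|h|` is at most `h` plus an integrable function on the product. Hence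
the iterated integral of `h` is finite only if `h` is integrable (`avgFDivergence_eq`), and
Fubini's theorem applies.
-/

open MeasureTheory ProbabilityTheory
open scoped ENNReal Classical

/-- The `f`-divergence `D_f(μ ‖ ν) = E_ν[f (dμ/dν)]`, as an extended real which equals `+∞`
when the integrand is not integrable. -/
noncomputable def fDivergence {Z : Type*} [MeasurableSpace Z] (f : ℝ → ℝ)
    (μ ν : Measure Z) : EReal :=
  if Integrable (fun z => f ((μ.rnDeriv ν z).toReal)) ν then
    ((∫ z, f ((μ.rnDeriv ν z).toReal) ∂ν : ℝ) : EReal)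
  else ⊤

/-- The expectation `E_{a ∼ μ}[D_f(κ(a) ‖ ν)]`, as an extended real which equals `+∞`
when the inner `f`-divergence is infinite on a non-null set or is not integrable. -/
noncomputable def avgFDivergence {A B : Type*} [MeasurableSpace A] [MeasurableSpace B]
    (f : ℝ → ℝ) (κ : Kernel A B) (ν : Measure B) (μ : Measure A) : EReal :=
  if (∀ᵐ a ∂μ, fDivergence f (κ a) ν ≠ ⊤) ∧
      Integrable (fun a => (fDivergence f (κ a) ν).toReal) μ then
    ((∫ a, (fDivergence f (κ a) ν).toReal ∂μ : ℝ) : EReal)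
  else ⊤

/-- The Radon-Nikodym derivative of `μ ⊗ₘ κ` with respect to a product measure is computed
sectionwise, also when `κ` has a singular part. -/
lemma rnDeriv_compProd_prod {A B : Type*} [MeasurableSpace A] [MeasurableSpace B]
    [MeasurableSpace.CountableOrCountablyGenerated A B]
    (κ : Kernel A B) [IsFiniteKernel κ] (ν : Measure B) [IsFiniteMeasure ν]
    (μ : Measure A) [IsFiniteMeasure μ] :
    ∀ᵐ a ∂μ, ∀ᵐ b ∂ν, (κ a).rnDeriv ν b = (μ ⊗ₘ κ).rnDeriv (μ.prod ν) (a, b) := by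
  set η : Kernel A B := Kernel.const A ν
  have hη : μ ⊗ₘ η = μ.prod ν := Measure.compProd_const
  have hsum : μ ⊗ₘ κ =
      μ ⊗ₘ κ.singularPart η + (μ.prod ν).withDensity (fun p => κ.rnDeriv η p.1 p.2) := by
    conv_lhs => rw [← Kernel.rnDeriv_add_singularPart κ η]
    rw [Measure.compProd_add_right,
      Measure.compProd_withDensity (Kernel.measurable_rnDeriv κ η), hη, add_comm]
  have hsing : μ ⊗ₘ κ.singularPart η ⟂ₘ μ.prod ν := by
    rw [← hη]
    exact Measure.MutuallySingular.compProd_of_right _ _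
      (.of_forall fun a => Kernel.mutuallySingular_singularPart κ η a)
  have hprod := Measure.eq_rnDeriv (Kernel.measurable_rnDeriv κ η) hsing hsum
  filter_upwards [Measure.ae_ae_of_ae_prod hprod] with a ha
  have hκ : κ.rnDeriv η a =ᵐ[ν] (κ a).rnDeriv ν := Kernel.rnDeriv_eq_rnDeriv_measure
  filter_upwards [ha, hκ] with b hb hb'
  rw [← hb', ← hb]

/-- The values of `f` on the negative reals never enter, and the value at `0` is unconstrained:
continuity on `(0, ∞)` is enough for measurability. -/
lemma measurable_comp_toReal {Z : Type*} [MeasurableSpace Z] {f : ℝ → ℝ}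
    (hf : ConvexOn ℝ (Set.Ioi 0) f) {g : Z → ℝ≥0∞} (hg : Measurable g) :
    Measurable (fun z => f (g z).toReal) := by
  have hm : Measurable ((Set.Ioi (0 : ℝ)).piecewise f fun _ => f 0) :=
    (hf.continuousOn isOpen_Ioi).measurable_piecewise continuousOn_const measurableSet_Ioi
  convert hm.comp hg.ennreal_toReal using 2 with z
  by_cases hz : 0 < (g z).toReal
  · simp [Set.piecewise, hz]
  · simp [Set.piecewise, le_antisymm (not_lt.mp hz) ENNReal.toReal_nonneg]

/-- A supporting line at `1` bounds the negative part of `f` affinely on `(0, ∞)`; the constant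
also absorbs the arbitrary value `f 0`. -/
lemma exists_abs_le_add_affine {f : ℝ → ℝ} (hf : ConvexOn ℝ (Set.Ioi 0) f) :
    ∃ c d : ℝ, ∀ t, 0 ≤ t → |f t| ≤ f t + (c * t + d) := by
  have h1 : (1 : ℝ) ∈ interior (Set.Ioi 0) := by simp
  set m := derivWithin f (Set.Ioi 1) 1
  have hline : ∀ t, 0 < t → f 1 + m * (t - 1) ≤ f t := by
    intro t ht
    rcases lt_trichotomy t 1 with h | rfl | h
    · have := (hf.slope_le_leftDeriv_of_mem_interior ht h1 h).trans
        (hf.leftDeriv_le_rightDeriv_of_mem_interior h1)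
      rw [slope_def_field, div_le_iff₀ (by linarith)] at this
      simp only [m]; linarith
    · simp
    · have := hf.rightDeriv_le_slope_of_mem_interior h1 ht h
      rw [slope_def_field, le_div_iff₀ (by linarith)] at this
      simp only [m]; linarith
  refine ⟨2 * |m|, 2 * (|f 1| + |m| + |f 0|), fun t ht => ?_⟩
  rcases ht.eq_or_lt with rfl | ht
  · linarith [neg_abs_le (f 0), abs_nonneg (f 1), abs_nonneg m, abs_nonneg (f 0)]
  · have hmt : -(|m| * t) ≤ m * t := by nlinarith [neg_abs_le m]
    have := hline t ht
    rw [abs_le']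
    constructor <;>
      nlinarith [neg_abs_le (f 1), le_abs_self m, abs_nonneg m, abs_nonneg (f 1),
        abs_nonneg (f 0), mul_nonneg (abs_nonneg m) ht.le]

/-- The averaged divergence is a single integral over the product space, whose integrand is
symmetric in the two factors. -/
lemma avgFDivergence_eq {A B : Type*} [MeasurableSpace A] [MeasurableSpace B]
    [MeasurableSpace.CountableOrCountablyGenerated A B]
    (κ : Kernel A B) [IsFiniteKernel κ] (ν : Measure B) [IsFiniteMeasure ν]
    (μ : Measure A) [IsFiniteMeasure μ] {f : ℝ → ℝ} (hf : ConvexOn ℝ (Set.Ioi 0) f) :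
    avgFDivergence f κ ν μ = fDivergence f (μ ⊗ₘ κ) (μ.prod ν) := by
  set g : A × B → ℝ := fun p => ((μ ⊗ₘ κ).rnDeriv (μ.prod ν) p).toReal with hg
  set h : A × B → ℝ := fun p => f (g p) with hh
  have hmeas : AEStronglyMeasurable h (μ.prod ν) :=
    (measurable_comp_toReal hf (Measure.measurable_rnDeriv _ _)).aestronglyMeasurable
  have hsec : ∀ᵐ a ∂μ, fDivergence f (κ a) ν =
      if Integrable (fun b => h (a, b)) ν then ((∫ b, h (a, b) ∂ν : ℝ) : EReal) else ⊤ := by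
    filter_upwards [rnDeriv_compProd_prod κ ν μ] with a ha
    have hae : (fun b => f ((κ a).rnDeriv ν b).toReal) =ᵐ[ν] fun b => h (a, b) := by
      filter_upwards [ha] with b hb
      simp only [hh, hg, hb]
    rw [fDivergence, integral_congr_ae hae, integrable_congr hae]
  have hfin : (∀ᵐ a ∂μ, fDivergence f (κ a) ν ≠ ⊤) ↔
      ∀ᵐ a ∂μ, Integrable (fun b => h (a, b)) ν := by
    refine Filter.eventually_congr ?_
    filter_upwards [hsec] with a ha
    rw [ha]
    split_ifs with hi <;> simp [hi]
  have hval : (∀ᵐ a ∂μ, Integrable (fun b => h (a, b)) ν) →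
      (fun a => (fDivergence f (κ a) ν).toReal) =ᵐ[μ] fun a => ∫ b, h (a, b) ∂ν := by
    intro hi
    filter_upwards [hsec, hi] with a ha hia
    rw [ha, if_pos hia, EReal.toReal_coe]
  have hiff : ((∀ᵐ a ∂μ, fDivergence f (κ a) ν ≠ ⊤) ∧
      Integrable (fun a => (fDivergence f (κ a) ν).toReal) μ) ↔ Integrable h (μ.prod ν) := by
    rw [hfin]
    constructor
    · rintro ⟨hi, hint⟩
      rw [integrable_congr (hval hi)] at hint
      obtain ⟨c, d, hcd⟩ := exists_abs_le_add_affine hf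
      have hu : Integrable (fun p => c * g p + d) (μ.prod ν) :=
        (Measure.integrable_toReal_rnDeriv.const_mul c).add (integrable_const d)
      refine (integrable_prod_iff hmeas).2 ⟨hi, ?_⟩
      refine (hint.add hu.integral_prod_left).mono' hmeas.norm.integral_prod_right' ?_
      filter_upwards [hi, hu.prod_right_ae] with a hia hua
      rw [Real.norm_of_nonneg (integral_nonneg fun b => norm_nonneg _), Pi.add_apply,
        ← integral_add hia hua]
      exact integral_mono hia.norm (hia.add hua) fun b => hcd _ ENNReal.toReal_nonneg
    · intro hi
      exact ⟨hi.prod_right_ae, hi.integral_prod_left.congr (hval hi.prod_right_ae).symm⟩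
  rw [avgFDivergence, fDivergence]
  by_cases hi : Integrable h (μ.prod ν)
  · rw [if_pos (hiff.2 hi), if_pos hi, integral_congr_ae (hval hi.prod_right_ae),
      ← integral_prod h hi]
  · rw [if_neg (mt hiff.1 hi), if_neg hi]

/-- Invariance of the divergence under an isomorphism of the underlying space. -/
lemma fDivergence_map_equiv {Z W : Type*} [MeasurableSpace Z] [MeasurableSpace W]
    (e : Z ≃ᵐ W) (f : ℝ → ℝ) (μ ν : Measure Z) [SigmaFinite μ] [SigmaFinite ν] :
    fDivergence f (μ.map e) (ν.map e) = fDivergence f μ ν := by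
  have hae : (fun z => f (((μ.map e).rnDeriv (ν.map e) (e z)).toReal)) =ᵐ[ν]
      fun z => f ((μ.rnDeriv ν z).toReal) := by
    filter_upwards [e.measurableEmbedding.rnDeriv_map μ ν] with z hz
    rw [hz]
  rw [fDivergence, fDivergence, integral_map_equiv, integrable_map_equiv, integral_congr_ae hae]
  simp only [Function.comp_def, integrable_congr hae]

theorem avgFDivergence_condDistrib_symm {Ω 𝓧 𝓨 : Type*} [MeasurableSpace Ω]
    [MeasurableSpace 𝓧] [StandardBorelSpace 𝓧] [Nonempty 𝓧]
    [MeasurableSpace 𝓨] [StandardBorelSpace 𝓨] [Nonempty 𝓨]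
    (P : Measure Ω) [IsProbabilityMeasure P]
    (X : Ω → 𝓧) (Y : Ω → 𝓨) (hX : Measurable X) (hY : Measurable Y)
    (f : ℝ → ℝ) (hf : ConvexOn ℝ (Set.Ioi 0) f) :
    avgFDivergence f (condDistrib Y X P) (P.map Y) (P.map X) =
      avgFDivergence f (condDistrib X Y P) (P.map X) (P.map Y) := by
  have : IsProbabilityMeasure (P.map X) := Measure.isProbabilityMeasure_map hX.aemeasurable
  have : IsProbabilityMeasure (P.map Y) := Measure.isProbabilityMeasure_map hY.aemeasurable
  have : IsProbabilityMeasure (P.map fun ω => (X ω, Y ω)) :=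
    Measure.isProbabilityMeasure_map (hX.prodMk hY).aemeasurable
  rw [avgFDivergence_eq _ _ _ hf, avgFDivergence_eq _ _ _ hf,
    compProd_map_condDistrib hY.aemeasurable, compProd_map_condDistrib hX.aemeasurable,
    ← fDivergence_map_equiv MeasurableEquiv.prodComm]
  congr 1
  · rw [Measure.map_map MeasurableEquiv.prodComm.measurable (hX.prodMk hY)]
    rfl
  · exact Measure.prod_swap
end

section
/- Let X be a real-valued random variable and write X₊ = max{X, 0}. (i) If E[X₊²] ≤ R² for some R > 0, then P(X₊ > t) ≤ R²/t² for all t > 0. (ii) Conversely, if X ≤ B almost surely for some B > 0, and P(X₊ > t) ≤ R²/t² for all t > 0 for some R with 0 < R ≤ B, then E[X₊²] ≤ R²·(1 + 2·log(B/R)). -/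
/-!
Write `Y = max X 0`. Part (i) is Markov's inequality for `Y ^ 2`. For part (ii), the layer cake
formula gives `E[Y ^ 2] = ∫ P (s < Y ^ 2) ds` over `s > 0`. The integrand is at most `1` on
`(0, R ^ 2]`, at most `R ^ 2 / s` on `(R ^ 2, B ^ 2]` by the tail bound at `t = √s`, and it vanishes
beyond `B ^ 2`. The three pieces contribute `R ^ 2`, `R ^ 2 * log (B ^ 2 / R ^ 2)` and `0`.
-/

open MeasureTheory
open scoped ENNReal

lemma lintegral_const_div_Ioc {c a b : ℝ} (hc : 0 ≤ c) (ha : 0 < a) (hab : a ≤ b) :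
    ∫⁻ s in Set.Ioc a b, ENNReal.ofReal (c / s) = ENNReal.ofReal (c * Real.log (b / a)) := by
  have hcont : IntervalIntegrable (fun s : ℝ => c / s) volume a b := by
    apply ContinuousOn.intervalIntegrable
    rw [Set.uIcc_of_le hab]
    exact continuousOn_const.div continuousOn_id fun s hs => (ha.trans_le hs.1).ne'
  rw [← ofReal_integral_eq_lintegral_ofReal
      ((intervalIntegrable_iff_integrableOn_Ioc_of_le hab).1 hcont),
    ← intervalIntegral.integral_of_le hab]
  · simp_rw [div_eq_mul_inv c]
    rw [intervalIntegral.integral_const_mul, integral_inv_of_pos ha (ha.trans_le hab)]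
  · filter_upwards [ae_restrict_mem measurableSet_Ioc] with s hs
    exact div_nonneg hc (ha.trans hs.1).le

/-- Chebychev-type tail bounds for the positive part of a random variable:
(i) a second-moment bound implies a quadratic tail bound, and (ii) conversely, for a
random variable bounded above, a quadratic tail bound implies a second-moment bound. -/
theorem pos_part_chebychev {Ω : Type*} [MeasurableSpace Ω]
    (P : Measure Ω) [IsProbabilityMeasure P] (X : Ω → ℝ) (hX : Measurable X) :
    (∀ R : ℝ, 0 < R →
      (∫⁻ ω, ENNReal.ofReal ((max (X ω) 0) ^ 2) ∂P) ≤ ENNReal.ofReal (R ^ 2) →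
      ∀ t : ℝ, 0 < t → P {ω | t < max (X ω) 0} ≤ ENNReal.ofReal (R ^ 2 / t ^ 2)) ∧
    (∀ B R : ℝ, 0 < B → 0 < R → R ≤ B →
      (∀ᵐ ω ∂P, X ω ≤ B) →
      (∀ t : ℝ, 0 < t → P {ω | t < max (X ω) 0} ≤ ENNReal.ofReal (R ^ 2 / t ^ 2)) →
      (∫⁻ ω, ENNReal.ofReal ((max (X ω) 0) ^ 2) ∂P) ≤
        ENNReal.ofReal (R ^ 2 * (1 + 2 * Real.log (B / R)))) := by
  have hY : Measurable fun ω => (max (X ω) 0) ^ 2 := (hX.max measurable_const).pow_const 2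
  refine ⟨fun R hR h t ht => ?_, fun B R hB hR hRB hXB h => ?_⟩
  · have ht2 : (0 : ℝ) < t ^ 2 := by positivity
    rw [ENNReal.ofReal_div_of_pos ht2]
    rw [ENNReal.le_div_iff_mul_le (Or.inl (by simpa using ht.ne'))
      (Or.inl ENNReal.ofReal_ne_top), mul_comm]
    refine le_trans ?_ ((mul_meas_ge_le_lintegral hY.ennreal_ofReal
      (ENNReal.ofReal (t ^ 2))).trans h)
    gcongr with ω
    intro hω
    exact ENNReal.ofReal_le_ofReal (pow_le_pow_left₀ ht.le (le_of_lt hω) 2)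
  · have hR2 : (0 : ℝ) < R ^ 2 := by positivity
    have hRB2 : R ^ 2 ≤ B ^ 2 := pow_le_pow_left₀ hR.le hRB 2
    rw [lintegral_eq_lintegral_meas_lt P (Filter.Eventually.of_forall fun ω => sq_nonneg _)
      hY.aemeasurable, ← Set.Ioc_union_Ioi_eq_Ioi hR2.le, ← Set.Ioc_union_Ioi_eq_Ioi hRB2]
    have h1 : ∫⁻ s in Set.Ioc 0 (R ^ 2), P {ω | s < (max (X ω) 0) ^ 2} ≤
        ENNReal.ofReal (R ^ 2) := by
      calc _ ≤ ∫⁻ _ in Set.Ioc (0 : ℝ) (R ^ 2), 1 := lintegral_mono fun s => prob_le_one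
        _ = _ := by simp
    have h2 : ∫⁻ s in Set.Ioc (R ^ 2) (B ^ 2), P {ω | s < (max (X ω) 0) ^ 2} ≤
        ENNReal.ofReal (R ^ 2 * Real.log (B ^ 2 / R ^ 2)) := by
      rw [← lintegral_const_div_Ioc hR2.le hR2 hRB2]
      refine setLIntegral_mono' measurableSet_Ioc fun s hs => ?_
      have hs0 : 0 < s := hR2.trans hs.1
      have key := h (√s) (Real.sqrt_pos.2 hs0)
      rw [Real.sq_sqrt hs0.le] at key
      refine le_trans (measure_mono fun ω hω => ?_) key
      exact (Real.sqrt_lt' (lt_of_le_of_ne (le_max_right _ _) fun h0 => by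
        simp only [Set.mem_ofPred_eq, ← h0] at hω
        linarith)).2 hω
    have h3 : ∫⁻ s in Set.Ioi (B ^ 2), P {ω | s < (max (X ω) 0) ^ 2} = 0 := by
      refine (setLIntegral_congr_fun measurableSet_Ioi fun s hs => ?_).trans lintegral_zero
      refine measure_eq_zero_iff_ae_notMem.2 ?_
      filter_upwards [hXB] with ω hω
      exact not_lt.2 ((pow_le_pow_left₀ (le_max_right _ _) (max_le hω hB.le) 2).trans
        (le_of_lt hs))
    have hlog : Real.log (B ^ 2 / R ^ 2) = 2 * Real.log (B / R) := by
      rw [← div_pow, Real.log_pow]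
      norm_num
    have hlog0 : 0 ≤ Real.log (B / R) := Real.log_nonneg ((one_le_div hR).2 hRB)
    refine (lintegral_union_le _ _ _).trans
      ((add_le_add h1 ((lintegral_union_le _ _ _).trans (add_le_add h2 h3.le))).trans ?_)
    rw [add_zero, ← ENNReal.ofReal_add hR2.le (by rw [hlog]; positivity), hlog, mul_add, mul_one]
end

section
/- Let T ≥ 3, R ≥ 1, and ρ ∈ (0, 1]. Let X be a real-valued random variable with |X| ≤ T almost surely such that P( X > R·(log(T²))^ρ ) ≤ 1/T². Then E[X₊²] ≤ 5·R²·(log T)^{2ρ}, and consequently P( X₊ ≥ t ) ≤ 5·R²·(log T)^{2ρ} / t² for all t > 0. -/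
open MeasureTheory
open scoped ENNReal

/-!
Put `A = R·(log T²)^ρ`. Almost surely `X₊² ≤ A² + T²·1_{X > A}`, and the tail hypothesis makes
the second term contribute at most `T²·T⁻² = 1` in expectation, so `E[X₊²] ≤ A² + 1`.
Since `A² = 2^{2ρ}·R²·(log T)^{2ρ}` with `2^{2ρ} ≤ 4`, and `1 ≤ R²·(log T)^{2ρ}` because
`T ≥ 3 > e`, this is at most `5·R²·(log T)^{2ρ}` (`threshold_sq_add_one_le`).
The tail bound is Markov's inequality applied to `X₊²`.
-/

lemma threshold_sq_add_one_le {T R ρ : ℝ} (hT : 3 ≤ T) (hR : 1 ≤ R)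
    (hρ : ρ ∈ Set.Ioc (0 : ℝ) 1) :
    (R * Real.log (T ^ 2) ^ ρ) ^ 2 + 1 ≤ 5 * R ^ 2 * Real.log T ^ (2 * ρ) := by
  obtain ⟨h0, h1⟩ := hρ
  have hL : 1 ≤ Real.log T := by
    rw [Real.le_log_iff_exp_le (by linarith)]
    linarith [Real.exp_one_lt_three]
  have hlog : Real.log (T ^ 2) = 2 * Real.log T := by
    rw [Real.log_pow]; norm_num
  have h2 : (2 : ℝ) ^ ρ ≤ 2 := by
    simpa using Real.rpow_le_rpow_of_exponent_le (x := 2) (by norm_num) h1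
  have hpos : 0 < (2 : ℝ) ^ ρ := by positivity
  have hLρ : 1 ≤ Real.log T ^ ρ := Real.one_le_rpow hL h0.le
  have hsq : Real.log T ^ (2 * ρ) = (Real.log T ^ ρ) ^ 2 := by
    rw [mul_comm, Real.rpow_mul (by linarith)]
    norm_num
  rw [hlog, hsq, Real.mul_rpow (by norm_num) (by linarith)]
  have h4 : ((2 : ℝ) ^ ρ) ^ 2 ≤ 4 := by nlinarith
  have hone : 1 ≤ (R * Real.log T ^ ρ) ^ 2 := by
    have : 1 ≤ R * Real.log T ^ ρ := by nlinarith
    nlinarith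
  calc (R * ((2 : ℝ) ^ ρ * Real.log T ^ ρ)) ^ 2 + 1
      = ((2 : ℝ) ^ ρ) ^ 2 * (R * Real.log T ^ ρ) ^ 2 + 1 := by ring
    _ ≤ 4 * (R * Real.log T ^ ρ) ^ 2 + (R * Real.log T ^ ρ) ^ 2 := by gcongr
    _ = 5 * R ^ 2 * (Real.log T ^ ρ) ^ 2 := by ring

/-- A random variable bounded by `T` in absolute value which satisfies the high-probability
bound `P(X > R·(log T²)^ρ) ≤ 1/T²` has one-sided second moment at most `5·R²·(log T)^{2ρ}`,
and is therefore sub-Chebychev with parameter `√5·R·(log T)^ρ`. -/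
theorem subChebychev_of_high_prob {Ω : Type*} [MeasurableSpace Ω]
    (P : Measure Ω) [IsProbabilityMeasure P] (X : Ω → ℝ) (hX : Measurable X)
    (T R ρ : ℝ) (hT : 3 ≤ T) (hR : 1 ≤ R) (hρ : ρ ∈ Set.Ioc (0 : ℝ) 1)
    (hbdd : ∀ᵐ ω ∂P, |X ω| ≤ T)
    (htail : P {ω | R * Real.log (T ^ 2) ^ ρ < X ω} ≤ ENNReal.ofReal (1 / T ^ 2)) :
    (∫⁻ ω, ENNReal.ofReal ((max (X ω) 0) ^ 2) ∂P) ≤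
        ENNReal.ofReal (5 * R ^ 2 * Real.log T ^ (2 * ρ)) ∧
      ∀ t : ℝ, 0 < t →
        P {ω | t ≤ max (X ω) 0} ≤
          ENNReal.ofReal (5 * R ^ 2 * Real.log T ^ (2 * ρ) / t ^ 2) := by
  have hsecond : (∫⁻ ω, ENNReal.ofReal ((max (X ω) 0) ^ 2) ∂P) ≤
      ENNReal.ofReal (5 * R ^ 2 * Real.log T ^ (2 * ρ)) := by
    refine le_trans ?_ (ENNReal.ofReal_le_ofReal (threshold_sq_add_one_le hT hR hρ))
    have hA : 0 ≤ R * Real.log (T ^ 2) ^ ρ :=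
      mul_nonneg (by linarith) (Real.rpow_nonneg (Real.log_nonneg (by nlinarith)) _)
    set A := R * Real.log (T ^ 2) ^ ρ
    have hS : MeasurableSet {ω | A < X ω} := measurableSet_lt measurable_const hX
    calc (∫⁻ ω, ENNReal.ofReal ((max (X ω) 0) ^ 2) ∂P)
        ≤ ∫⁻ ω, (ENNReal.ofReal (A ^ 2) +
            {ω | A < X ω}.indicator (fun _ => ENNReal.ofReal (T ^ 2)) ω) ∂P := by
          refine lintegral_mono_ae ?_
          filter_upwards [hbdd] with ω hω
          by_cases h : A < X ω
          · rw [Set.indicator_of_mem (by exact h)]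
            refine le_add_left (ENNReal.ofReal_le_ofReal ?_)
            exact pow_le_pow_left₀ (le_max_right _ _)
              (max_le ((le_abs_self _).trans hω) (by linarith)) 2
          · rw [Set.indicator_of_notMem (by exact h), add_zero]
            exact ENNReal.ofReal_le_ofReal
              (pow_le_pow_left₀ (le_max_right _ _) (max_le (not_lt.mp h) hA) 2)
      _ = ENNReal.ofReal (A ^ 2) + ENNReal.ofReal (T ^ 2) * P {ω | A < X ω} := by
          rw [lintegral_add_left measurable_const, lintegral_indicator_const hS]
          simp
      _ ≤ ENNReal.ofReal (A ^ 2) + ENNReal.ofReal (T ^ 2) * ENNReal.ofReal (1 / T ^ 2) := by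
          gcongr
      _ = ENNReal.ofReal (A ^ 2 + 1) := by
          rw [← ENNReal.ofReal_mul (sq_nonneg T), mul_one_div_cancel (by positivity),
            ENNReal.ofReal_add (sq_nonneg A) zero_le_one]
  refine ⟨hsecond, fun t ht => ?_⟩
  have ht2 : 0 < t ^ 2 := by positivity
  rw [ENNReal.ofReal_div_of_pos ht2]
  calc P {ω | t ≤ max (X ω) 0}
      ≤ P {ω | ENNReal.ofReal (t ^ 2) ≤ ENNReal.ofReal ((max (X ω) 0) ^ 2)} :=
        measure_mono fun ω hω =>
          ENNReal.ofReal_le_ofReal (pow_le_pow_left₀ ht.le (by exact hω) 2)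
    _ ≤ (∫⁻ ω, ENNReal.ofReal ((max (X ω) 0) ^ 2) ∂P) / ENNReal.ofReal (t ^ 2) :=
        meas_ge_le_lintegral_div (by fun_prop)
          (ENNReal.ofReal_pos.mpr ht2).ne' ENNReal.ofReal_ne_top
    _ ≤ _ := ENNReal.div_le_div_right hsecond _
end

section
/- Fix a nonempty finite set Π, a measurable space Z, a map M assigning to each π ∈ Π a probability measure M(π) on Z, a function f : Π → [0,1], a real number η > 0, a probability vector q on Π, and an element π* ∈ Π. For p in the set C of strictly positive probability vectors on Π (p(π) > 0 for all π, Σ_π p(π) = 1) and g in the real vector space G of bounded measurable functions g : Π × Π × Z → ℝ, define Γ(p, g) = Σ_{π∈Π} p(π)·(f(π*) − f(π)) + (1/η)·( Σ_{π∈Π} p(π) · Σ_{π'∈Π} q(π') · ∫_Z exp( (η/p(π)) · ( g(π', π, z) − g(π*, π, z) ) ) dM(π)(z) − 1 ). Then Γ is jointly convex on C × G: for all p₀, p₁ ∈ C, g₀, g₁ ∈ G and λ ∈ [0,1], Γ(λp₀+(1−λ)p₁, λg₀+(1−λ)g₁) ≤ λ·Γ(p₀, g₀) + (1−λ)·Γ(p₁,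 g₁). -/
/-!
For `u > 0` the perspective `(u, t) ↦ u * exp (η / u * t)` of the convex function
`t ↦ exp (η * t)` is jointly convex. Since `Γ` is affine in `p` plus a nonnegative combination,
over `π`, `π'` and `z`, of such perspectives evaluated at `u = p π` and at the linear expression
`t = g π' π z - g πs π z`, joint convexity follows by integrating the pointwise inequality
`mul_exp_perspective_convex` and summing. Boundedness and measurability of `g` supply the
integrability needed for monotonicity and linearity of the integral.
-/

open MeasureTheory
open scoped ENNReal BigOperators

/-- The high-probability exploration-by-optimization objective `Γ_{q,η}(p, g; π*, M)`. -/
noncomputable def expOptObjective {D Z : Type*} [Fintype D] [MeasurableSpace Z]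
    (M : D → Measure Z) (f : D → ℝ) (η : ℝ) (q : D → ℝ) (πs : D)
    (p : D → ℝ) (g : D → D → Z → ℝ) : ℝ :=
  (∑ π, p π * (f πs - f π)) +
    (1 / η) * ((∑ π, p π * ∑ π', q π' *
      ∫ z, Real.exp ((η / p π) * (g π' π z - g πs π z)) ∂(M π)) - 1)

/-- Joint convexity of the perspective of `t ↦ exp (η * t)`. -/
theorem mul_exp_perspective_convex (η u v s t l : ℝ) (hu : 0 < u) (hv : 0 < v)
    (hl0 : 0 ≤ l) (hl1 : 0 ≤ 1 - l) :
    (l * u + (1 - l) * v) * Real.exp (η / (l * u + (1 - l) * v) * (l * s + (1 - l) * t)) ≤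
      l * (u * Real.exp (η / u * s)) + (1 - l) * (v * Real.exp (η / v * t)) := by
  have hw : 0 < l * u + (1 - l) * v := by
    rcases hl0.eq_or_lt with h | h
    · subst h; simpa using hv
    · have := mul_pos h hu
      have := mul_nonneg hl1 hv.le
      linarith
  set w := l * u + (1 - l) * v with hwdef
  -- The weights `l * u / w` and `(1 - l) * v / w` turn the claim into convexity of `exp`.
  have h := convexOn_exp.2 (Set.mem_univ (η / u * s)) (Set.mem_univ (η / v * t))
    (show 0 ≤ l * u / w by positivity) (show 0 ≤ (1 - l) * v / w by positivity)
    (by rw [← add_div, ← hwdef, div_self hw.ne'])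
  simp only [smul_eq_mul] at h
  have harg : η / w * (l * s + (1 - l) * t) =
      l * u / w * (η / u * s) + (1 - l) * v / w * (η / v * t) := by
    field_simp
  rw [harg]
  refine (mul_le_mul_of_nonneg_left h hw.le).trans_eq ?_
  field_simp

theorem integrable_exp_mul_sub_of_bounded {Z : Type*} [MeasurableSpace Z] (μ : Measure Z)
    [IsFiniteMeasure μ] (c C : ℝ) (a b : Z → ℝ) (ha : Measurable a) (hb : Measurable b)
    (haC : ∀ z, |a z| ≤ C) (hbC : ∀ z, |b z| ≤ C) :
    Integrable (fun z => Real.exp (c * (a z - b z))) μ := by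
  refine Integrable.of_bound (C := Real.exp (|c| * (C + C)))
    (by fun_prop) (Filter.Eventually.of_forall fun z => ?_)
  rw [Real.norm_eq_abs, Real.abs_exp, Real.exp_le_exp]
  refine (le_abs_self _).trans ?_
  rw [abs_mul]
  exact mul_le_mul_of_nonneg_left ((abs_sub _ _).trans (add_le_add (haC z) (hbC z)))
    (abs_nonneg c)

/-- The objective `Γ` is jointly convex in the sampling distribution `p` (over strictly
positive probability vectors) and the estimation function `g` (over bounded measurable
functions). -/
theorem expOptObjective_jointly_convex {D Z : Type*} [Fintype D] [Nonempty D]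
    [MeasurableSpace Z]
    (M : D → Measure Z) (hM : ∀ π, IsProbabilityMeasure (M π))
    (f : D → ℝ) (hf : ∀ π, f π ∈ Set.Icc (0 : ℝ) 1)
    (η : ℝ) (hη : 0 < η)
    (q : D → ℝ) (hq0 : ∀ π, 0 ≤ q π) (hq1 : ∑ π, q π = 1)
    (πs : D)
    (p₀ p₁ : D → ℝ)
    (hp₀pos : ∀ π, 0 < p₀ π) (hp₀sum : ∑ π, p₀ π = 1)
    (hp₁pos : ∀ π, 0 < p₁ π) (hp₁sum : ∑ π, p₁ π = 1)
    (g₀ g₁ : D → D → Z → ℝ)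
    (hg₀meas : ∀ π' π, Measurable (g₀ π' π)) (hg₀bdd : ∃ C, ∀ π' π z, |g₀ π' π z| ≤ C)
    (hg₁meas : ∀ π' π, Measurable (g₁ π' π)) (hg₁bdd : ∃ C, ∀ π' π z, |g₁ π' π z| ≤ C)
    (l : ℝ) (hl : l ∈ Set.Icc (0 : ℝ) 1) :
    expOptObjective M f η q πs (fun π => l * p₀ π + (1 - l) * p₁ π)
        (fun π' π z => l * g₀ π' π z + (1 - l) * g₁ π' π z) ≤
      l * expOptObjective M f η q πs p₀ g₀ +
        (1 - l) * expOptObjective M f η q πs p₁ g₁ := by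
  obtain ⟨hl0, hl1⟩ := hl
  replace hl1 : 0 ≤ 1 - l := sub_nonneg.2 hl1
  obtain ⟨C₀, hC₀⟩ := hg₀bdd
  obtain ⟨C₁, hC₁⟩ := hg₁bdd
  have hI₀ : ∀ c π' π, Integrable (fun z => Real.exp (c * (g₀ π' π z - g₀ πs π z))) (M π) :=
    fun c π' π => integrable_exp_mul_sub_of_bounded (M π) c C₀ _ _ (hg₀meas π' π)
      (hg₀meas πs π) (hC₀ π' π) (hC₀ πs π)
  have hI₁ : ∀ c π' π, Integrable (fun z => Real.exp (c * (g₁ π' π z - g₁ πs π z))) (M π) :=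
    fun c π' π => integrable_exp_mul_sub_of_bounded (M π) c C₁ _ _ (hg₁meas π' π)
      (hg₁meas πs π) (hC₁ π' π) (hC₁ πs π)
  have hint : ∀ π π',
      (l * p₀ π + (1 - l) * p₁ π) * ∫ z, Real.exp ((η / (l * p₀ π + (1 - l) * p₁ π)) *
        ((l * g₀ π' π z + (1 - l) * g₁ π' π z) - (l * g₀ πs π z + (1 - l) * g₁ πs π z))) ∂(M π) ≤
      l * (p₀ π * ∫ z, Real.exp ((η / p₀ π) * (g₀ π' π z - g₀ πs π z)) ∂(M π)) +
      (1 - l) * (p₁ π * ∫ z, Real.exp ((η / p₁ π) * (g₁ π' π z - g₁ πs π z)) ∂(M π)) := by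
    intro π π'
    have h0 := ((hI₀ (η / p₀ π) π' π).const_mul (p₀ π)).const_mul l
    have h1 := ((hI₁ (η / p₁ π) π' π).const_mul (p₁ π)).const_mul (1 - l)
    simp only [← integral_const_mul]
    rw [← integral_add h0 h1]
    refine integral_mono_of_nonneg (Filter.Eventually.of_forall fun z => ?_) (h0.add h1)
      (Filter.Eventually.of_forall fun z => ?_)
    · have := (hp₀pos π).le
      have := (hp₁pos π).le
      simp only [Pi.zero_apply]
      positivity
    · have h := mul_exp_perspective_convex η (p₀ π) (p₁ π) (g₀ π' π z - g₀ πs π z)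
        (g₁ π' π z - g₁ πs π z) l (hp₀pos π) (hp₁pos π) hl0 hl1
      refine le_of_eq_of_le ?_ h
      ring_nf
  have hsum := Finset.sum_le_sum fun π (_ : π ∈ Finset.univ) =>
    Finset.sum_le_sum fun π' (_ : π' ∈ Finset.univ) =>
      mul_le_mul_of_nonneg_left (hint π π') (hq0 π')
  simp only [mul_add, Finset.sum_add_distrib, mul_left_comm (q _), ← Finset.mul_sum] at hsum
  have hlin : ∑ π, (l * p₀ π + (1 - l) * p₁ π) * (f πs - f π) =
      l * ∑ π, p₀ π * (f πs - f π) + (1 - l) * ∑ π, p₁ π * (f πs - f π) := by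
    simp only [Finset.mul_sum, ← Finset.sum_add_distrib]
    exact Finset.sum_congr rfl fun π _ => by ring
  unfold expOptObjective
  rw [hlin]
  have := mul_le_mul_of_nonneg_left hsum (one_div_nonneg.2 hη.le)
  linarith
end

section
/- Let (Ω, 𝓕, P) be a probability space, let Π be a nonempty finite set, and let ω ↦ ν_ω be a measurable family of probability vectors on Π. Define the mixture ν̄ on Π by ν̄(π) = ∫_Ω ν_ω(π) dP(ω), and let q be any probability vector on Π. Then ∫_Ω H²(ν_ω, ν̄) dP(ω) ≤ 4 · ∫_Ω H²(ν_ω, q) dP(ω). Moreover, H²(ν̄, q) ≤ ∫_Ω H²(ν_ω, q) dP(ω). -/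
/-!
Everything is proved one coordinate `π` at a time and then summed. Fix `π`, put `X = √ν_ω(π)`,
`t = √q(π)` and `s = √ν̄(π)`, so that `s² = E[X²]`. Since the variance of `X` is nonnegative,
`E[X] ≤ s` (`integral_sqrt_le_sqrt_integral`). Expanding the squares, with `t ≥ 0`,
`(s - t)² = s² - 2 s t + t² ≤ E[X²] - 2 t E[X] + t² = E[(X - t)²]`
(`sq_sqrt_integral_sub_le`), which is the second claim. The first follows from it and
`(X - s)² ≤ 2 (X - t)² + 2 (s - t)²`: integrating gives
`E[(X - s)²] ≤ 4 E[(X - t)²]` (`integral_sq_sqrt_sub_mean_le`).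
-/

open MeasureTheory
open scoped ENNReal BigOperators

/-- Squared Hellinger distance between two probability vectors on a finite set. -/
noncomputable def hellingerSqVec {D : Type*} [Fintype D] (μ ν : D → ℝ) : ℝ :=
  ∑ π, (Real.sqrt (μ π) - Real.sqrt (ν π)) ^ 2

section Coordinate

variable {Ω : Type*} [MeasurableSpace Ω] {P : Measure Ω} [IsProbabilityMeasure P] {f : Ω → ℝ}

lemma integrable_of_unit_bounds (hf : Measurable f) (h0 : ∀ ω, 0 ≤ f ω) (h1 : ∀ ω, f ω ≤ 1) :
    Integrable f P :=
  Integrable.of_bound hf.aestronglyMeasurable 1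
    (ae_of_all _ fun ω => by rw [Real.norm_eq_abs, abs_of_nonneg (h0 ω)]; exact h1 ω)

lemma integrable_sqrt_of_unit_bounds (hf : Measurable f) (h1 : ∀ ω, f ω ≤ 1) :
    Integrable (fun ω => √(f ω)) P :=
  integrable_of_unit_bounds hf.sqrt (fun _ => Real.sqrt_nonneg _)
    fun ω => Real.sqrt_le_one.2 (h1 ω)

lemma sq_sqrt_sub_eq {x : ℝ} (hx : 0 ≤ x) (t : ℝ) : (√x - t) ^ 2 = x - 2 * t * √x + t ^ 2 := by
  rw [sub_sq, Real.sq_sqrt hx]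
  ring

lemma integrable_sq_sqrt_sub (hf : Measurable f) (h0 : ∀ ω, 0 ≤ f ω) (h1 : ∀ ω, f ω ≤ 1)
    (t : ℝ) : Integrable (fun ω => (√(f ω) - t) ^ 2) P := by
  simp_rw [sq_sqrt_sub_eq (h0 _)]
  exact ((integrable_of_unit_bounds hf h0 h1).sub
    ((integrable_sqrt_of_unit_bounds hf h1).const_mul _)).add (integrable_const _)

lemma integral_sq_sqrt_sub (hf : Measurable f) (h0 : ∀ ω, 0 ≤ f ω) (h1 : ∀ ω, f ω ≤ 1)
    (t : ℝ) :
    ∫ ω, (√(f ω) - t) ^ 2 ∂P = ∫ ω, f ω ∂P - 2 * t * ∫ ω, √(f ω) ∂P + t ^ 2 := by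
  have hi := integrable_of_unit_bounds (P := P) hf h0 h1
  have hs := (integrable_sqrt_of_unit_bounds (P := P) hf h1).const_mul (2 * t)
  have hd : Integrable (fun ω => f ω - 2 * t * √(f ω)) P := hi.sub hs
  simp_rw [sq_sqrt_sub_eq (h0 _)]
  rw [integral_add hd (integrable_const _), integral_sub hi hs, integral_const_mul]
  simp

/-- Jensen's inequality for the square root, obtained from the nonnegativity of the variance
of `√f`. -/
lemma integral_sqrt_le_sqrt_integral (hf : Measurable f) (h0 : ∀ ω, 0 ≤ f ω)
    (h1 : ∀ ω, f ω ≤ 1) : ∫ ω, √(f ω) ∂P ≤ √(∫ ω, f ω ∂P) := by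
  apply Real.le_sqrt_of_sq_le
  have hvar : 0 ≤ ∫ ω, (√(f ω) - ∫ ω', √(f ω') ∂P) ^ 2 ∂P :=
    integral_nonneg fun _ => sq_nonneg _
  rw [integral_sq_sqrt_sub hf h0 h1] at hvar
  linarith

/-- One coordinate of the inequality `H²(ν̄, q) ≤ E[H²(ν, q)]`, with `t` in the role of
`√q(π)`. -/
lemma sq_sqrt_integral_sub_le (hf : Measurable f) (h0 : ∀ ω, 0 ≤ f ω) (h1 : ∀ ω, f ω ≤ 1)
    {t : ℝ} (ht : 0 ≤ t) : (√(∫ ω, f ω ∂P) - t) ^ 2 ≤ ∫ ω, (√(f ω) - t) ^ 2 ∂P := by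
  rw [integral_sq_sqrt_sub hf h0 h1, sq_sqrt_sub_eq (integral_nonneg h0)]
  have := mul_le_mul_of_nonneg_left (integral_sqrt_le_sqrt_integral (P := P) hf h0 h1) ht
  linarith

/-- One coordinate of the inequality `E[H²(ν, ν̄)] ≤ 4 E[H²(ν, q)]`, with `t` in the role of
`√q(π)`. -/
lemma integral_sq_sqrt_sub_mean_le (hf : Measurable f) (h0 : ∀ ω, 0 ≤ f ω) (h1 : ∀ ω, f ω ≤ 1)
    {t : ℝ} (ht : 0 ≤ t) :
    ∫ ω, (√(f ω) - √(∫ ω', f ω' ∂P)) ^ 2 ∂P ≤ 4 * ∫ ω, (√(f ω) - t) ^ 2 ∂P := by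
  have hmix := sq_sqrt_integral_sub_le (P := P) hf h0 h1 ht
  set s := √(∫ ω', f ω' ∂P)
  have hint := (integrable_sq_sqrt_sub (P := P) hf h0 h1 t).const_mul 2
  calc ∫ ω, (√(f ω) - s) ^ 2 ∂P
      ≤ ∫ ω, (2 * (√(f ω) - t) ^ 2 + 2 * (s - t) ^ 2) ∂P :=
        integral_mono (integrable_sq_sqrt_sub hf h0 h1 s) (hint.add (integrable_const _))
          fun ω => by
            -- the difference of the two sides is `(√f + s - 2t)²`
            dsimp only
            nlinarith [sq_nonneg (√(f ω) + s - 2 * t)]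
    _ = 2 * ∫ ω, (√(f ω) - t) ^ 2 ∂P + 2 * (s - t) ^ 2 := by
        rw [integral_add hint (integrable_const _), integral_const_mul]
        simp
    _ ≤ 4 * ∫ ω, (√(f ω) - t) ^ 2 ∂P := by linarith

end Coordinate

/-- For a measurable family of probability vectors `ν_ω` with mixture `ν̄`, the average
squared Hellinger distance to the mixture is at most four times the average squared
Hellinger distance to any fixed probability vector `q`; moreover the squared Hellinger
distance from the mixture to `q` is at most the average squared Hellinger distance
from `ν_ω` to `q`. -/
theorem avg_hellingerSq_mixture {Ω D : Type*} [MeasurableSpace Ω] [Fintype D] [Nonempty D]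
    (P : Measure Ω) [IsProbabilityMeasure P]
    (ν : Ω → D → ℝ) (hmeas : ∀ π, Measurable fun ω => ν ω π)
    (hν0 : ∀ ω π, 0 ≤ ν ω π) (hν1 : ∀ ω, ∑ π, ν ω π = 1)
    (q : D → ℝ) (hq0 : ∀ π, 0 ≤ q π) (hq1 : ∑ π, q π = 1) :
    (∫ ω, hellingerSqVec (ν ω) (fun π => ∫ ω', ν ω' π ∂P) ∂P
        ≤ 4 * ∫ ω, hellingerSqVec (ν ω) q ∂P) ∧
      hellingerSqVec (fun π => ∫ ω, ν ω π ∂P) q ≤ ∫ ω, hellingerSqVec (ν ω) q ∂P := by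
  have hle : ∀ π ω, ν ω π ≤ 1 := fun π ω =>
    (Finset.single_le_sum (fun i _ => hν0 ω i) (Finset.mem_univ π)).trans_eq (hν1 ω)
  have hsum : ∀ p : D → ℝ,
      ∫ ω, hellingerSqVec (ν ω) p ∂P = ∑ π, ∫ ω, (√(ν ω π) - √(p π)) ^ 2 ∂P := fun p =>
    integral_finsetSum _ fun π _ =>
      integrable_sq_sqrt_sub (hmeas π) (fun ω => hν0 ω π) (hle π) _
  rw [hsum, hsum, Finset.mul_sum]
  exact ⟨Finset.sum_le_sum fun π _ => integral_sq_sqrt_sub_mean_le (hmeas π)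
      (fun ω => hν0 ω π) (hle π) (Real.sqrt_nonneg _),
    Finset.sum_le_sum fun π _ => sq_sqrt_integral_sub_le (hmeas π)
      (fun ω => hν0 ω π) (hle π) (Real.sqrt_nonneg _)⟩
end
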